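/- There exist universal constants c > 0 and n₀ such that for all n ≥ n₀, r ≥ 1, integer 1 ≤ p ≤ n, and k with n·r ≤ k ≤ n²: if a randomized t-round adaptive algorithm making k exact linear measurements per round is such that for every n×n real matrix A it outputs a matrix B of rank at most r satisfying ‖A − B‖_{F_p} ≤ 2·min{‖A − X‖_{F_p} : rank(X) ≤ r} with probability at least 99/100 (over the seed), then t ≥ c·log(n²/k)/(log p + log log n). -/

import Mathlib

/-!
The hard inputs are `A = s u vᵀ + G` with `u`, `v` uniform sign vectors and `G` a standard Gaussian
matrix. With probability at least `9/10` one has `‖G‖ ≤ τ = 3 √(40 n log n)`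
(`gaussian_specNorm_tail`); since `‖M‖ ≤ ‖M‖_{F_p} ≤ p ‖M‖`, a 2-approximation of `A` in the Ky-Fan
norm is then within `3pτ` of the plant `s u vᵀ` in spectral norm (`specNorm_sub_le_of_approx`). The
scale `s = 6pτ/n` makes this at most half of `‖s u vᵀ‖ = s n`, and a fixed matrix of rank at most
`r` is that close to the plants of only a fraction `e^{-(n/8 - r/2)}` of all sign pairs
(`card_close_le`). So a successful algorithm has to identify the plant to a large extent.

For a deterministic algorithm the transcript on `b + G` has an explicit density with respect to
independent Gaussians (`QueryMaps.lintegral_resp`): by rotation invariance, the measured component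
of `G` can be resampled independently of the rest, and Cameron–Martin handles the shift. The square
of this likelihood ratio is the one for `2b`, times `e^{energy}`, where the energy is the squared
norm of the component of `b` captured by all queries (`QueryMaps.lik_sq`). Truncating the likelihood
ratio with the help of this second moment gives a Fano-type bound (`QueryMaps.sum_measure_le`): if
each transcript is compatible with at most a fraction `e^{-D}` of the plants, then a compatible
plant together with energy at most `m` has probability at most `2 e^{(m - D)/2}` on average.

This bound is used twice. First, `k` orthonormal queries fixed in advance capture from `u ⊗ v` more
than `x` units of energy only for a fraction `e^{-(x/(8n) - k/(2n))}` of the sign pairs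
(`card_energy_le`, a moment bound for the quadratic chaos, proved by Gaussian linearization in the
eigenbasis and applied in `v` and then in `u`). Hence the energy captured after one more round is
with high probability at most the previous one times `2 + 8 s² n`, which is of order `p² log n`
(`QueryMaps.sum_escape_le`). Second, after `t` rounds the total energy is too small for the output
to be close to the plant unless `(C p² log n)^{t+1} k log n` exceeds `n²` up to a constant
(`sum_close_le`). Averaging over the seed extends this to randomized algorithms (`avg_contra`), and
taking logarithms gives the theorem. The case of no rounds and the case `t > n / 8` are immediate.
-/

open MeasureTheory ProbabilityTheory Matrix
open scoped ENNReal Classical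

noncomputable section

/-- Squared Euclidean norm of a finitely-indexed real vector. -/
def sqNorm {ι : Type*} [Fintype ι] (x : ι → ℝ) : ℝ := ∑ i, x i ^ 2

/-- Squared Frobenius norm of a real matrix. -/
def frobSq {m n : Type*} [Fintype m] [Fintype n] (A : Matrix m n ℝ) : ℝ :=
  ∑ i, ∑ j, A i j ^ 2

/-- Spectral (ℓ₂ operator) norm of a real matrix. -/
def specNorm {m n : Type*} [Fintype m] [Fintype n] (A : Matrix m n ℝ) : ℝ :=
  sSup ((fun x : n → ℝ => Real.sqrt (sqNorm (A.mulVec x))) '' {x | sqNorm x ≤ 1})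

/-- `i`-th largest singular value (1-based), characterized via
`σ_i(A) = min {‖A − X‖ : rank X ≤ i − 1}`. -/
def singVal {m n : Type*} [Fintype m] [Fintype n] (A : Matrix m n ℝ) (i : ℕ) : ℝ :=
  sInf {c | ∃ X : Matrix m n ℝ, X.rank ≤ i - 1 ∧ c = specNorm (A - X)}

/-- Flattening of an `n × n` matrix into a vector in `ℝ^{n²}`. -/
def vec (n : ℕ) (A : Matrix (Fin n) (Fin n) ℝ) : Fin (n * n) → ℝ :=
  fun i => A (finProdFinEquiv.symm i).1 (finProdFinEquiv.symm i).2

/-- `u ⊗ v = vec (u vᵀ) ∈ ℝ^{n²}`. -/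
def tensor {n : ℕ} (u v : Fin n → ℝ) : Fin (n * n) → ℝ :=
  vec n (Matrix.of fun i j => u i * v j)

/-- Standard Gaussian measure on `ι → ℝ`. -/
def stdGaussian (ι : Type*) [Fintype ι] : Measure (ι → ℝ) :=
  Measure.pi fun _ => gaussianReal 0 1

/-- Standard Gaussian measure on `n × n` matrices (as `Fin n → Fin n → ℝ`). -/
def stdGaussianMat (n : ℕ) : Measure (Fin n → Fin n → ℝ) :=
  Measure.pi fun _ => stdGaussian (Fin n)

/-- Query maps of a deterministic `t`-round adaptive algorithm making `k` linear
measurements per round on inputs in `ℝ^N`. -/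
def QueryMaps (N k t : ℕ) : Type :=
  (j : Fin t) → (Fin (j : ℕ) → (Fin k → ℝ)) → Matrix (Fin k) (Fin N) ℝ

namespace QueryMaps

variable {N k t : ℕ}

/-- Restriction of a round-`j` history to the first `i` rounds. -/
def prefixHist {j : Fin t} (h : Fin (j : ℕ) → Fin k → ℝ) {i : Fin t}
    (hij : (i : ℕ) < (j : ℕ)) : Fin (i : ℕ) → Fin k → ℝ :=
  fun l => h ⟨l.1, l.isLt.trans hij⟩

/-- Validity of query maps: measurability, orthonormal rows within each round, and
orthogonality across rounds along consistent histories. -/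
def Valid (Q : QueryMaps N k t) : Prop :=
  (∀ (j : Fin t) (i : Fin k) (l : Fin N), Measurable fun h => Q j h i l) ∧
  (∀ (j : Fin t) (h : Fin (j : ℕ) → Fin k → ℝ), Q j h * (Q j h)ᵀ = 1) ∧
  (∀ (j i : Fin t) (hij : (i : ℕ) < (j : ℕ)) (h : Fin (j : ℕ) → Fin k → ℝ),
      Q j h * (Q i (prefixHist h hij))ᵀ = 0)

/-- Responses of the algorithm under exact linear measurements of `a`. -/
def resp (Q : QueryMaps N k t) (a : Fin N → ℝ) (j : Fin t) : Fin k → ℝ :=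
  (Q j fun i => resp Q a ⟨i.1, i.isLt.trans j.isLt⟩).mulVec a
termination_by (j : ℕ)
decreasing_by exact i.isLt

/-- Responses of the algorithm under noisy linear measurements of `a`, with fresh
per-round noise `g`. -/
def nresp (Q : QueryMaps N k t) (a : Fin N → ℝ) (g : Fin t → Fin k → ℝ) (j : Fin t) :
    Fin k → ℝ :=
  ((Q j fun i => nresp Q a g ⟨i.1, i.isLt.trans j.isLt⟩).mulVec a) + g j
termination_by (j : ℕ)
decreasing_by exact i.isLt

/-- The `tk × N` matrix stacking all the query matrices realized along the run of the
algorithm on input `a` (exact measurements). -/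
def runMat (Q : QueryMaps N k t) (a : Fin N → ℝ) : Matrix (Fin t × Fin k) (Fin N) ℝ :=
  Matrix.of fun p l =>
    Q p.1 (fun i => resp Q a ⟨i.1, i.isLt.trans p.1.isLt⟩) p.2 l

end QueryMaps

/-- Kullback–Leibler divergence, valued in `[0, ∞]`, defined with the natural
logarithm. -/
def klDiv {Ω : Type*} [MeasurableSpace Ω] (P Q : Measure Ω) : ℝ≥0∞ :=
  if P ≪ Q ∧ Integrable (fun x => Real.log ((P.rnDeriv Q x).toReal)) P then
    ENNReal.ofReal (∫ x, Real.log ((P.rnDeriv Q x).toReal) ∂P)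
  else ⊤


/-- The rank-`r` plant `Σ_{i=1}^r uᵢ vᵢᵀ` built from the rows of `U` and `V`. -/
def plant {n r : ℕ} (U V : Fin r → Fin n → ℝ) : Matrix (Fin n) (Fin n) ℝ :=
  Matrix.of fun i j => ∑ l, U l i * V l j

/-- Schatten-`p` norm (real `p`), via the singular values. -/
def schattenNorm {n : ℕ} (p : ℝ) (A : Matrix (Fin n) (Fin n) ℝ) : ℝ :=
  (∑ i ∈ Finset.range n, singVal A (i + 1) ^ p) ^ (1 / p)

/-- Ky-Fan `p` norm: sum of the `p` largest singular values. -/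
def kyFanNorm {n : ℕ} (p : ℕ) (A : Matrix (Fin n) (Fin n) ℝ) : ℝ :=
  ∑ i ∈ Finset.range p, singVal A (i + 1)

/-! ### Sign vectors and their quadratic forms -/

/-- The sign vector in `{-1, 1}^n` encoded by a Boolean vector. -/
def sgn {n : ℕ} (u : Fin n → Bool) : Fin n → ℝ := fun i => if u i then 1 else -1

lemma sgn_sq {n : ℕ} (u : Fin n → Bool) (i : Fin n) : sgn u i ^ 2 = 1 := by
  unfold sgn; split_ifs <;> norm_num

lemma sqNorm_sgn {n : ℕ} (u : Fin n → Bool) : sqNorm (sgn u) = n := by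
  simp [sqNorm, sgn_sq]

lemma sqNorm_nonneg {ι : Type*} [Fintype ι] (x : ι → ℝ) : 0 ≤ sqNorm x :=
  Finset.sum_nonneg fun _ _ => sq_nonneg _

lemma sqNorm_eq_dot {ι : Type*} [Fintype ι] (x : ι → ℝ) : sqNorm x = x ⬝ᵥ x := by
  simp [sqNorm, dotProduct, sq]

lemma sum_exp_sgn_le {n : ℕ} (z : Fin n → ℝ) :
    ∑ u : Fin n → Bool, Real.exp (∑ i, z i * sgn u i)
      ≤ 2 ^ n * Real.exp (sqNorm z / 2) := by
  have h1 : ∑ u : Fin n → Bool, Real.exp (∑ i, z i * sgn u i)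
      = ∏ i : Fin n, ∑ b : Bool, Real.exp (z i * (if b then 1 else -1)) := by
    rw [Finset.prod_univ_sum, Fintype.piFinset_univ]
    refine Finset.sum_congr rfl fun u _ => ?_
    rw [Real.exp_sum]; rfl
  rw [h1]
  have h2 : ∀ i : Fin n, ∑ b : Bool, Real.exp (z i * (if b then 1 else -1))
      ≤ 2 * Real.exp (z i ^ 2 / 2) := by
    intro i
    have := Real.cosh_le_exp_half_sq (z i)
    rw [Real.cosh_eq] at this
    simp only [Fintype.sum_bool, if_true, mul_one]
    simp
    linarith
  refine (Finset.prod_le_prod (fun i _ => by positivity) fun i _ => h2 i).trans ?_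
  rw [Finset.prod_mul_distrib, ← Real.exp_sum]
  simp [sqNorm, Finset.sum_div]

lemma gaussian_exp_mul (c : ℝ) :
    ∫ x, Real.exp (c * x) ∂(gaussianReal 0 1) = Real.exp (c ^ 2 / 2) := by
  have := mgf_gaussianReal (p := gaussianReal 0 1) (X := id) (μ := 0) (v := 1) (by simp) c
  simpa [mgf] using this

lemma gaussian_exp_mul_integrable (c : ℝ) :
    Integrable (fun x => Real.exp (c * x)) (gaussianReal 0 1) :=
  integrable_exp_mul_gaussianReal c

lemma gaussian_exp_sq {a : ℝ} (ha : 0 ≤ a) (ha' : a ≤ 1 / 4) :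
    Integrable (fun x => Real.exp (a * x ^ 2)) (gaussianReal 0 1) ∧
    ∫ x, Real.exp (a * x ^ 2) ∂(gaussianReal 0 1) ≤ Real.exp (2 * a) := by
  have hb : 0 < 1 / 2 - a := by linarith
  have hpdf : ∀ x, gaussianPDFReal 0 1 x * Real.exp (a * x ^ 2)
      = (√(2 * Real.pi))⁻¹ * Real.exp (-(1 / 2 - a) * x ^ 2) := by
    intro x
    simp only [gaussianPDFReal, NNReal.coe_one, mul_one, sub_zero]
    rw [mul_assoc, ← Real.exp_add]; congr 2; ring
  constructor
  · rw [gaussianReal_of_var_ne_zero _ one_ne_zero]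
    rw [integrable_withDensity_iff_integrable_smul' (measurable_gaussianPDF 0 1)
      (by simp [gaussianPDF])]
    simp only [toReal_gaussianPDF, smul_eq_mul, hpdf]
    exact (integrable_exp_neg_mul_sq hb).const_mul _
  · rw [integral_gaussianReal_eq_integral_smul one_ne_zero]
    simp only [smul_eq_mul, hpdf]
    rw [integral_const_mul, integral_gaussian]
    rw [← Real.sqrt_inv, ← Real.sqrt_mul (by positivity)]
    rw [show 2 * a = (4 * a) / 2 by ring, Real.exp_half]
    apply Real.sqrt_le_sqrt
    have e : (2 * Real.pi)⁻¹ * (Real.pi / (1 / 2 - a)) = 1 / (1 - 2 * a) := by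
      have := Real.pi_pos
      field_simp
    rw [e, div_le_iff₀ (by linarith)]
    have := Real.quadratic_le_exp_of_nonneg (x := 4 * a) (by linarith)
    nlinarith [Real.exp_pos (4 * a)]

/-- Exponential moments of the quadratic form `‖Tu‖²` at a uniform sign vector `u`.  Writing
`TᵀT` in an orthonormal eigenbasis, `exp (lam‖Tu‖²)` is the Gaussian average of the exponential of
a linear form in `u`, which is then bounded coordinatewise. -/
lemma sum_exp_quad_le {n : ℕ} {m : Type*} [Fintype m] (T : Matrix m (Fin n) ℝ) {lam κ : ℝ}
    (hlam : 0 ≤ lam) (hT : ∀ x, sqNorm (T.mulVec x) ≤ κ * sqNorm x) (hk : lam * κ ≤ 1 / 4) :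
    ∑ u : Fin n → Bool, Real.exp (lam * sqNorm (T.mulVec (sgn u)))
      ≤ 2 ^ n * Real.exp (2 * lam * frobSq T) := by
  have hM : (Tᵀ * T).PosSemidef := by
    have := Matrix.posSemidef_conjTranspose_mul_self T
    simpa using this
  set e := hM.1.eigenvectorBasis with he
  set ev := hM.1.eigenvalues with hev
  have hquad : ∀ x : Fin n → ℝ, sqNorm (T.mulVec x) = x ⬝ᵥ ((Tᵀ * T).mulVec x) := by
    intro x
    rw [sqNorm_eq_dot, ← Matrix.mulVec_mulVec, Matrix.dotProduct_mulVec x, Matrix.vecMul_transpose]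
  have hev0 : ∀ i, 0 ≤ ev i := hM.eigenvalues_nonneg
  have hen : ∀ i, sqNorm (WithLp.ofLp (e i)) = 1 := by
    intro i
    have h1 : ‖e i‖ = 1 := e.orthonormal.1 i
    have := EuclideanSpace.real_norm_sq_eq (e i)
    rw [h1] at this
    simp [sqNorm, ← this]
  have hevk : ∀ i, lam * ev i ≤ 1 / 4 := by
    intro i
    have h1 := hT (WithLp.ofLp (e i))
    rw [hquad, hM.1.mulVec_eigenvectorBasis, dotProduct_smul, ← sqNorm_eq_dot, hen] at h1
    simp only [smul_eq_mul, mul_one] at h1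
    exact (mul_le_mul_of_nonneg_left h1 hlam).trans hk
  have htr : ∑ i, ev i = frobSq T := by
    have h1 := hM.1.trace_eq_sum_eigenvalues
    have h2 : (Tᵀ * T).trace = frobSq T := by
      simp only [Matrix.trace, Matrix.diag, Matrix.mul_apply, Matrix.transpose_apply, frobSq]
      rw [Finset.sum_comm]; simp [sq]
    rw [← h2, h1]; simp [hev]
  -- expansion of the quadratic form in the eigenbasis
  have hexp : ∀ x : Fin n → ℝ, sqNorm (T.mulVec x)
      = ∑ i, ev i * (WithLp.ofLp (e i) ⬝ᵥ x) ^ 2 := by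
    intro x
    have hx : x = ∑ i, (WithLp.ofLp (e i) ⬝ᵥ x) • WithLp.ofLp (e i) := by
      have := e.sum_repr' (WithLp.toLp 2 x)
      have h2 := congrArg WithLp.ofLp this
      simp only [WithLp.ofLp_sum, WithLp.ofLp_smul] at h2
      refine h2.symm.trans ?_
      refine Finset.sum_congr rfl fun i _ => ?_
      congr 1
      rw [dotProduct_comm]
      simp [PiLp.inner_apply, dotProduct, mul_comm]
    rw [hquad]
    conv_lhs => rhs; rw [hx]
    rw [Matrix.mulVec_sum, dotProduct_sum]
    refine Finset.sum_congr rfl fun i _ => ?_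
    rw [Matrix.mulVec_smul, hM.1.mulVec_eigenvectorBasis, dotProduct_smul, dotProduct_smul,
      dotProduct_comm x]
    simp only [smul_eq_mul]; ring
  set a : Fin n → ℝ := fun i => √(2 * lam * ev i) with ha
  have ha2 : ∀ i, a i ^ 2 = 2 * lam * ev i := fun i =>
    Real.sq_sqrt (by have := hev0 i; positivity)
  set γ : Measure (Fin n → ℝ) := Measure.pi fun _ => gaussianReal 0 1 with hγ
  -- Gaussian linearization
  have hlin : ∀ x : Fin n → ℝ, Real.exp (lam * sqNorm (T.mulVec x))
      = ∫ h, ∏ i, Real.exp ((a i * (WithLp.ofLp (e i) ⬝ᵥ x)) * h i) ∂γ := by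
    intro x
    rw [hγ, integral_fintype_prod_eq_prod
      (f := fun i y => Real.exp ((a i * (WithLp.ofLp (e i) ⬝ᵥ x)) * y))]
    simp only [gaussian_exp_mul]
    rw [← Real.exp_sum, hexp, Finset.mul_sum]
    congr 1
    refine Finset.sum_congr rfl fun i _ => ?_
    rw [mul_pow, ha2]; ring
  have hint : ∀ x : Fin n → ℝ, Integrable
      (fun h : Fin n → ℝ => ∏ i, Real.exp ((a i * (WithLp.ofLp (e i) ⬝ᵥ x)) * h i)) γ := fun x =>
    Integrable.fintype_prod (f := fun i y => Real.exp ((a i * (WithLp.ofLp (e i) ⬝ᵥ x)) * y))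
      fun i => gaussian_exp_mul_integrable _
  simp only [hlin]
  rw [← integral_finsetSum _ fun u _ => hint (sgn u)]
  have hpt : ∀ h : Fin n → ℝ,
      ∑ u : Fin n → Bool, ∏ i, Real.exp ((a i * (WithLp.ofLp (e i) ⬝ᵥ sgn u)) * h i)
      ≤ 2 ^ n * ∏ i, Real.exp ((lam * ev i) * h i ^ 2) := by
    intro h
    set z : Fin n → ℝ := ∑ i, (a i * h i) • WithLp.ofLp (e i) with hz
    have h1 : ∀ u : Fin n → Bool, ∏ i, Real.exp ((a i * (WithLp.ofLp (e i) ⬝ᵥ sgn u)) * h i)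
        = Real.exp (∑ i, z i * sgn u i) := by
      intro u
      rw [← Real.exp_sum]
      congr 1
      change _ = z ⬝ᵥ sgn u
      rw [hz, sum_dotProduct]
      refine Finset.sum_congr rfl fun i _ => ?_
      rw [smul_dotProduct]; simp only [smul_eq_mul]; ring
    simp only [h1]
    refine (sum_exp_sgn_le z).trans ?_
    rw [← Real.exp_sum]
    have h2 : sqNorm z = ∑ i, (a i * h i) ^ 2 := by
      have h3 : ‖∑ i, (a i * h i) • e i‖ ^ 2 = ∑ i, (a i * h i) ^ 2 := by
        rw [← real_inner_self_eq_norm_sq, e.orthonormal.inner_sum]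
        simp [sq]
      rw [← h3, EuclideanSpace.real_norm_sq_eq, hz]
      simp [sqNorm]
    rw [h2]
    gcongr
    rw [Finset.sum_div]
    refine le_of_eq (Finset.sum_congr rfl fun i _ => ?_)
    rw [mul_pow, ha2]; ring
  have hint2 : Integrable (fun h : Fin n → ℝ => ∏ i, Real.exp ((lam * ev i) * h i ^ 2)) γ :=
    Integrable.fintype_prod (f := fun i y => Real.exp ((lam * ev i) * y ^ 2))
      fun i => (gaussian_exp_sq (mul_nonneg hlam (hev0 i)) (hevk i)).1
  refine (integral_mono (integrable_finsetSum _ fun u _ => hint (sgn u))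
    (hint2.const_mul _) hpt).trans ?_
  rw [integral_const_mul, hγ, integral_fintype_prod_eq_prod
    (f := fun i y => Real.exp ((lam * ev i) * y ^ 2))]
  refine mul_le_mul_of_nonneg_left ?_ (by positivity)
  refine (Finset.prod_le_prod (fun i _ => integral_nonneg fun _ => (Real.exp_pos _).le)
    fun i _ => (gaussian_exp_sq (mul_nonneg hlam (hev0 i)) (hevk i)).2).trans ?_
  rw [← Real.exp_sum, ← htr, Finset.mul_sum]
  exact Real.exp_le_exp.mpr (le_of_eq (Finset.sum_congr rfl fun i _ => by ring))

/-! ### Energy captured by orthonormal measurements -/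

lemma sqNorm_mulVec_le {m ι : Type*} [Fintype m] [DecidableEq m] [Fintype ι] (Q : Matrix m ι ℝ)
    (hQ : Q * Qᵀ = 1) (x : ι → ℝ) : sqNorm (Q.mulVec x) ≤ sqNorm x := by
  have h := sqNorm_nonneg (x - Qᵀ.mulVec (Q.mulVec x))
  have h1 : x ⬝ᵥ Qᵀ.mulVec (Q.mulVec x) = sqNorm (Q.mulVec x) := by
    rw [Matrix.dotProduct_mulVec, Matrix.vecMul_transpose, sqNorm_eq_dot]
  have h2 : Qᵀ.mulVec (Q.mulVec x) ⬝ᵥ Qᵀ.mulVec (Q.mulVec x) = sqNorm (Q.mulVec x) := by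
    rw [Matrix.dotProduct_mulVec, Matrix.vecMul_transpose, Matrix.mulVec_mulVec, hQ,
      Matrix.one_mulVec, sqNorm_eq_dot]
  rw [sqNorm_eq_dot, sub_dotProduct, dotProduct_sub, dotProduct_sub, h2, h1,
    dotProduct_comm (Qᵀ.mulVec _) x, h1, ← sqNorm_eq_dot] at h
  linarith

lemma frobSq_of_orthonormal {m ι : Type*} [Fintype m] [DecidableEq m] [Fintype ι] (Q : Matrix m ι ℝ)
    (hQ : Q * Qᵀ = 1) : frobSq Q = Fintype.card m := by
  have : ∀ i, ∑ j, Q i j ^ 2 = 1 := by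
    intro i
    have := congrFun (congrFun hQ i) i
    simpa [Matrix.mul_apply, sq] using this
  simp [frobSq, this]

lemma sum_fin_mul {n : ℕ} (f : Fin (n * n) → ℝ) :
    ∑ l, f l = ∑ a : Fin n, ∑ b : Fin n, f (finProdFinEquiv (a, b)) := by
  rw [← finProdFinEquiv.sum_comp, Fintype.sum_prod_type]

lemma tensor_apply {n : ℕ} (u v : Fin n → ℝ) (a b : Fin n) :
    tensor u v (finProdFinEquiv (a, b)) = u a * v b := by
  simp [tensor, _root_.vec]

lemma sqNorm_tensor {n : ℕ} (u v : Fin n → ℝ) :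
    sqNorm (tensor u v) = sqNorm u * sqNorm v := by
  simp only [sqNorm]
  rw [sum_fin_mul]
  simp [tensor_apply, Finset.sum_mul_sum, mul_pow]

/-- Pairs of sign vectors, the index set of the planted directions. -/
abbrev SignPair (n : ℕ) : Type := (Fin n → Bool) × (Fin n → Bool)

/-- The planted direction `u ⊗ v` of a pair of sign vectors. -/
def signTensor {n : ℕ} (w : SignPair n) : Fin (n * n) → ℝ := tensor (sgn w.1) (sgn w.2)

lemma card_signPair (n : ℕ) : (Fintype.card (SignPair n) : ℝ) = 2 ^ n * 2 ^ n := by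
  simp [SignPair]

/-- Exponential moment of the energy `‖Q(u ⊗ v)‖²` captured by `k` orthonormal measurements:
the quadratic bound is applied first in `v` and then in `u`. -/
lemma sum_exp_tensor_le {n k : ℕ} (hn : 0 < n) (Q : Matrix (Fin k) (Fin (n * n)) ℝ)
    (hQ : Q * Qᵀ = 1) :
    ∑ w : SignPair n, Real.exp (1 / (8 * n) * sqNorm (Q.mulVec (signTensor w)))
      ≤ Fintype.card (SignPair n) * Real.exp (k / (2 * n)) := by
  have hn' : (0 : ℝ) < n := by exact_mod_cast hn
  set T : (Fin n → ℝ) → Matrix (Fin k) (Fin n) ℝ := fun u =>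
    Matrix.of fun i b => ∑ a, u a * Q i (finProdFinEquiv (a, b)) with hTdef
  have hTv : ∀ u v, (T u).mulVec v = Q.mulVec (tensor u v) := by
    intro u v
    ext i
    simp only [Matrix.mulVec, dotProduct, hTdef, Matrix.of_apply]
    rw [sum_fin_mul, Finset.sum_comm]
    refine Finset.sum_congr rfl fun b _ => ?_
    rw [Finset.sum_mul]
    refine Finset.sum_congr rfl fun a _ => ?_
    rw [tensor_apply]; ring
  set S : Matrix (Fin k × Fin n) (Fin n) ℝ :=
    Matrix.of fun ib a => Q ib.1 (finProdFinEquiv (a, ib.2)) with hS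
  have hSu : ∀ u, sqNorm (S.mulVec u) = frobSq (T u) := by
    intro u
    simp only [sqNorm, frobSq, Fintype.sum_prod_type, Matrix.mulVec, dotProduct, hS, hTdef,
      Matrix.of_apply]
    simp only [mul_comm]
  have hSF : frobSq S = k := by
    have := frobSq_of_orthonormal Q hQ
    rw [Fintype.card_fin] at this
    rw [← this]
    simp only [frobSq, Fintype.sum_prod_type, hS, Matrix.of_apply]
    refine Finset.sum_congr rfl fun i _ => ?_
    rw [sum_fin_mul, Finset.sum_comm]
  have hSb : ∀ x, sqNorm (S.mulVec x) ≤ n * sqNorm x := by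
    intro x
    have h1 : sqNorm (S.mulVec x)
        = ∑ b : Fin n, sqNorm (Q.mulVec (tensor x (Pi.single b 1))) := by
      simp only [sqNorm, Fintype.sum_prod_type]
      rw [Finset.sum_comm]
      refine Finset.sum_congr rfl fun b _ => Finset.sum_congr rfl fun i _ => ?_
      congr 1
      rw [← hTv]
      rw [Matrix.mulVec_single_one]
      simp [hS, hTdef, Matrix.mulVec, dotProduct, mul_comm]
    rw [h1]
    refine (Finset.sum_le_sum fun b _ => sqNorm_mulVec_le Q hQ _).trans ?_
    have : ∀ b : Fin n, sqNorm (Pi.single b 1 : Fin n → ℝ) = 1 := by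
      intro b; rw [sqNorm_eq_dot]; simp
    simp [sqNorm_tensor, this]
  have hTb : ∀ (u : Fin n → Bool) x, sqNorm ((T (sgn u)).mulVec x) ≤ n * sqNorm x := by
    intro u x
    rw [hTv]
    refine (sqNorm_mulVec_le Q hQ _).trans ?_
    rw [sqNorm_tensor, sqNorm_sgn]
  have hstep : ∀ u : Fin n → Bool,
      ∑ v : Fin n → Bool, Real.exp (1 / (8 * n) * sqNorm (Q.mulVec (signTensor (u, v))))
        ≤ 2 ^ n * Real.exp (1 / (4 * n) * sqNorm (S.mulVec (sgn u))) := by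
    intro u
    have := sum_exp_quad_le (T (sgn u)) (lam := 1 / (8 * n)) (by positivity) (hTb u)
      (by field_simp; norm_num)
    simp only [hTv] at this
    refine this.trans (le_of_eq ?_)
    rw [hSu]; congr 2; field_simp; ring
  rw [Fintype.sum_prod_type]
  refine (Finset.sum_le_sum fun u _ => hstep u).trans ?_
  rw [← Finset.mul_sum, card_signPair, mul_assoc]
  refine mul_le_mul_of_nonneg_left ?_ (by positivity)
  refine (sum_exp_quad_le S (lam := 1 / (4 * n)) (by positivity) hSb
    (by field_simp; norm_num)).trans (le_of_eq ?_)
  rw [hSF]; congr 2; field_simp; norm_num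

/-- Markov's inequality for an exponential moment over a finite set. -/
lemma card_le_of_sum_exp {W : Type*} [Fintype W] (f : W → ℝ) {C lam x : ℝ} (hlam : 0 ≤ lam)
    (h : ∑ w, Real.exp (lam * f w) ≤ C) (s : Finset W) (hs : ∀ w ∈ s, x ≤ f w) :
    (s.card : ℝ) ≤ C * Real.exp (-(lam * x)) := by
  have h1 : (s.card : ℝ) * Real.exp (lam * x) ≤ C := by
    calc (s.card : ℝ) * Real.exp (lam * x) = ∑ _w ∈ s, Real.exp (lam * x) := by simp
      _ ≤ ∑ w ∈ s, Real.exp (lam * f w) := Finset.sum_le_sum fun w hw => by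
          have := hs w hw; gcongr
      _ ≤ ∑ w, Real.exp (lam * f w) :=
          Finset.sum_le_sum_of_subset_of_nonneg (Finset.subset_univ _)
            fun _ _ _ => (Real.exp_pos _).le
      _ ≤ C := h
  rw [Real.exp_neg, ← div_eq_mul_inv, le_div_iff₀ (Real.exp_pos _)]
  exact h1

/-- Fixed orthonormal queries capture energy at least `x` from only a small fraction of the planted
directions. -/
lemma card_energy_le {n k : ℕ} (hn : 0 < n) (Q : Matrix (Fin k) (Fin (n * n)) ℝ)
    (hQ : Q * Qᵀ = 1) (x : ℝ) (s : Finset (SignPair n))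
    (hs : ∀ w ∈ s, x ≤ sqNorm (Q.mulVec (signTensor w))) :
    (s.card : ℝ) ≤ Fintype.card (SignPair n) * Real.exp (-(x / (8 * n) - k / (2 * n))) := by
  refine (card_le_of_sum_exp _ (by positivity) (sum_exp_tensor_le hn Q hQ) s hs).trans
    (le_of_eq ?_)
  rw [mul_assoc, ← Real.exp_add]
  congr 2; ring

/-! ### The spectral norm and the Ky-Fan norm -/

open scoped Matrix.Norms.L2Operator in
lemma specNorm_eq_norm {n : ℕ} (A : Matrix (Fin n) (Fin n) ℝ) : specNorm A = ‖A‖ := by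
  rw [Matrix.cstar_norm_def, ← ContinuousLinearMap.sSup_unitClosedBall_eq_norm, specNorm]
  congr 1
  ext c
  simp only [Set.mem_image, Set.mem_ofPred_eq, Metric.mem_closedBall, dist_zero_right]
  have key : ∀ y : Fin n → ℝ, ‖WithLp.toLp 2 y‖ = √(sqNorm y) := fun y => by
    rw [EuclideanSpace.norm_eq]; simp [sqNorm]
  constructor
  · rintro ⟨x, hx, rfl⟩
    refine ⟨WithLp.toLp 2 x, ?_, ?_⟩
    · rw [key]; exact Real.sqrt_le_one.mpr hx
    · rw [Matrix.toEuclideanCLM_toLp, key]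
  · rintro ⟨x, hx, rfl⟩
    refine ⟨WithLp.ofLp x, ?_, ?_⟩
    · rw [show x = WithLp.toLp 2 (WithLp.ofLp x) from rfl, key] at hx
      exact Real.sqrt_le_one.mp hx
    · rw [← key]; rfl

lemma specNorm_nonneg {m n : Type*} [Fintype m] [Fintype n] (A : Matrix m n ℝ) :
    0 ≤ specNorm A :=
  Real.sSup_nonneg (by rintro _ ⟨x, -, rfl⟩; exact Real.sqrt_nonneg _)

open scoped Matrix.Norms.L2Operator in
lemma specNorm_add_le {n : ℕ} (A B : Matrix (Fin n) (Fin n) ℝ) :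
    specNorm (A + B) ≤ specNorm A + specNorm B := by
  simp only [specNorm_eq_norm]; exact norm_add_le A B

open scoped Matrix.Norms.L2Operator in
lemma specNorm_neg {n : ℕ} (A : Matrix (Fin n) (Fin n) ℝ) : specNorm (-A) = specNorm A := by
  simp only [specNorm_eq_norm]; exact norm_neg A

open scoped Matrix.Norms.L2Operator in
lemma specNorm_eq_zero {n : ℕ} {A : Matrix (Fin n) (Fin n) ℝ} (h : specNorm A ≤ 0) : A = 0 := by
  rw [specNorm_eq_norm] at h; exact norm_le_zero_iff.mp h

open scoped Matrix.Norms.L2Operator in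
lemma bilin_le {n : ℕ} (A : Matrix (Fin n) (Fin n) ℝ) (x y : Fin n → ℝ) :
    x ⬝ᵥ A.mulVec y ≤ specNorm A * √(sqNorm x) * √(sqNorm y) := by
  have key : ∀ y : Fin n → ℝ, ‖WithLp.toLp 2 y‖ = √(sqNorm y) := fun y => by
    rw [EuclideanSpace.norm_eq]; simp [sqNorm]
  have h := Matrix.l2_opNorm_mulVec A (WithLp.toLp 2 y)
  have h2 := real_inner_le_norm (WithLp.toLp 2 x) (WithLp.toLp 2 (A.mulVec y))
  have h3 : inner ℝ (WithLp.toLp 2 x) (WithLp.toLp 2 (A.mulVec y)) = x ⬝ᵥ A.mulVec y := by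
    simp [PiLp.inner_apply, dotProduct, mul_comm]
  rw [h3, key, key] at h2
  change ‖WithLp.toLp 2 (A.mulVec y)‖ ≤ _ at h
  rw [← specNorm_eq_norm, key, key] at h
  nlinarith [Real.sqrt_nonneg (sqNorm x)]

lemma specNorm_le_of_bilin {n : ℕ} (A : Matrix (Fin n) (Fin n) ℝ) {c : ℝ} (hc : 0 ≤ c)
    (h : ∀ x y : Fin n → ℝ, sqNorm x ≤ 1 → sqNorm y ≤ 1 → x ⬝ᵥ A.mulVec y ≤ c) :
    specNorm A ≤ c := by
  refine Real.sSup_le ?_ hc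
  rintro _ ⟨y, hy, rfl⟩
  set z := A.mulVec y with hz
  change √(sqNorm z) ≤ c
  rcases eq_or_ne (sqNorm z) 0 with h0 | h0
  · rw [h0]; simpa using hc
  have hpos : 0 < sqNorm z := lt_of_le_of_ne (sqNorm_nonneg z) (Ne.symm h0)
  have hs : 0 < √(sqNorm z) := Real.sqrt_pos.mpr hpos
  have h1 := h ((√(sqNorm z))⁻¹ • z) y ?_ hy
  · rw [smul_dotProduct, ← hz, ← sqNorm_eq_dot, smul_eq_mul] at h1
    have : (√(sqNorm z))⁻¹ * sqNorm z = √(sqNorm z) := by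
      rw [inv_mul_eq_div]; exact Real.div_sqrt
    rwa [this] at h1
  · rw [sqNorm_eq_dot, smul_dotProduct, dotProduct_smul, ← sqNorm_eq_dot]
    simp only [smul_eq_mul]
    rw [← mul_assoc, ← mul_inv, Real.mul_self_sqrt hpos.le, inv_mul_cancel₀ h0]

lemma singVal_nonneg {n : ℕ} (A : Matrix (Fin n) (Fin n) ℝ) (i : ℕ) : 0 ≤ singVal A i :=
  Real.sInf_nonneg (by rintro _ ⟨X, -, rfl⟩; exact specNorm_nonneg _)

lemma singVal_le_specNorm {n : ℕ} (A : Matrix (Fin n) (Fin n) ℝ) (i : ℕ) :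
    singVal A i ≤ specNorm A :=
  csInf_le ⟨0, by rintro _ ⟨X, -, rfl⟩; exact specNorm_nonneg _⟩ ⟨0, by simp, by simp⟩

lemma singVal_one {n : ℕ} (A : Matrix (Fin n) (Fin n) ℝ) : singVal A 1 = specNorm A := by
  refine le_antisymm (singVal_le_specNorm A 1) (le_csInf ⟨_, 0, by simp, rfl⟩ ?_)
  rintro _ ⟨X, hX, rfl⟩
  have : X = 0 := by
    have h0 : X.rank = 0 := by simpa using hX
    rw [Matrix.rank, Submodule.finrank_eq_zero, LinearMap.range_eq_bot] at h0
    ext i j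
    have := congrFun (LinearMap.congr_fun h0 (Pi.single j 1)) i
    simpa using this
  simp [this]

lemma kyFanNorm_nonneg {n : ℕ} (p : ℕ) (A : Matrix (Fin n) (Fin n) ℝ) : 0 ≤ kyFanNorm p A :=
  Finset.sum_nonneg fun _ _ => singVal_nonneg A _

lemma specNorm_le_kyFanNorm {n p : ℕ} (hp : 1 ≤ p) (A : Matrix (Fin n) (Fin n) ℝ) :
    specNorm A ≤ kyFanNorm p A := by
  rw [← singVal_one]
  exact Finset.single_le_sum (f := fun i => singVal A (i + 1))
    (fun i _ => singVal_nonneg A _) (Finset.mem_range.mpr hp)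

lemma kyFanNorm_le {n : ℕ} (p : ℕ) (A : Matrix (Fin n) (Fin n) ℝ) :
    kyFanNorm p A ≤ p * specNorm A := by
  refine (Finset.sum_le_sum fun i _ => singVal_le_specNorm A (i + 1)).trans ?_
  simp

/-- A near-optimal rank-`r` approximation `B` of `A` is close, in spectral norm, to every `P` of
rank at most `r` that is itself close to `A`. This uses only `‖·‖ ≤ ‖·‖_{F_p} ≤ p ‖·‖` and the
triangle inequality. -/
lemma specNorm_sub_le_of_approx {n r p : ℕ} (hp : 1 ≤ p) (A P B : Matrix (Fin n) (Fin n) ℝ)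
    (hP : P.rank ≤ r) {τ : ℝ} (hτ : specNorm (A - P) ≤ τ)
    (h : kyFanNorm p (A - B) ≤ 2 * sInf {c' | ∃ X : Matrix (Fin n) (Fin n) ℝ,
      X.rank ≤ r ∧ c' = kyFanNorm p (A - X)}) :
    specNorm (P - B) ≤ 3 * p * τ := by
  have hp1 : (1 : ℝ) ≤ p := by exact_mod_cast hp
  have h1 : sInf {c' | ∃ X : Matrix (Fin n) (Fin n) ℝ,
      X.rank ≤ r ∧ c' = kyFanNorm p (A - X)} ≤ kyFanNorm p (A - P) :=
    csInf_le ⟨0, by rintro _ ⟨X, -, rfl⟩; exact kyFanNorm_nonneg _ _⟩ ⟨P, hP, rfl⟩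
  have h2 := kyFanNorm_le p (A - P)
  have h3 := specNorm_le_kyFanNorm hp (A - B)
  have h4 := specNorm_add_le (A - B) (-(A - P))
  rw [specNorm_neg, show A - B + -(A - P) = P - B by abel] at h4
  have h0 : 0 ≤ τ := (specNorm_nonneg _).trans hτ
  nlinarith

/-! ### Rank-one plants and their low-rank approximations -/

/-- The rank-one plant `s · u vᵀ`. -/
def plantMat {n : ℕ} (s : ℝ) (w : SignPair n) : Matrix (Fin n) (Fin n) ℝ :=
  Matrix.of fun i j => s * (sgn w.1 i * sgn w.2 j)

lemma plantMat_mulVec {n : ℕ} (s : ℝ) (w : SignPair n) (y : Fin n → ℝ) :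
    (plantMat s w).mulVec y = (s * (sgn w.2 ⬝ᵥ y)) • sgn w.1 := by
  ext i
  simp only [plantMat, Matrix.mulVec, dotProduct, Matrix.of_apply, Pi.smul_apply, smul_eq_mul,
    Finset.mul_sum, Finset.sum_mul]
  exact Finset.sum_congr rfl fun j _ => by ring

lemma rank_plantMat_le {n : ℕ} (s : ℝ) (w : SignPair n) : (plantMat s w).rank ≤ 1 := by
  have : plantMat s w = Matrix.vecMulVec (s • sgn w.1) (sgn w.2) := by
    ext i j; simp [plantMat, Matrix.vecMulVec_apply, mul_assoc]
  rw [this]; exact Matrix.rank_vecMulVec_le _ _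

lemma vec_plantMat {n : ℕ} (s : ℝ) (w : SignPair n) :
    _root_.vec n (plantMat s w) = s • signTensor w := by
  ext l; simp [_root_.vec, plantMat, signTensor, tensor]

/-- An orthonormal basis of the column space of `B`, as the rows of a matrix `T`. -/
lemma exists_colspace_basis {n : ℕ} (B : Matrix (Fin n) (Fin n) ℝ) :
    ∃ (d : ℕ) (T : Matrix (Fin d) (Fin n) ℝ), d = B.rank ∧ T * Tᵀ = 1 ∧
      ∀ y, Tᵀ.mulVec (T.mulVec (B.mulVec y)) = B.mulVec y := by
  obtain ⟨V, hdim, hmemV⟩ : ∃ V : Submodule ℝ (EuclideanSpace ℝ (Fin n)),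
      Module.finrank ℝ V = B.rank ∧ ∀ y, WithLp.toLp 2 (B.mulVec y) ∈ V := by
    refine ⟨(LinearMap.range B.mulVecLin).map
      (WithLp.linearEquiv 2 ℝ (Fin n → ℝ)).symm.toLinearMap, ?_, fun y => ?_⟩
    · rw [LinearEquiv.finrank_map_eq]; rfl
    · exact ⟨B.mulVec y, ⟨y, rfl⟩, rfl⟩
  have e := stdOrthonormalBasis ℝ V
  obtain ⟨f, hf⟩ : ∃ f : Fin (Module.finrank ℝ V) → Fin n → ℝ,
      ∀ i, f i = WithLp.ofLp (e i : EuclideanSpace ℝ (Fin n)) := ⟨_, fun _ => rfl⟩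
  have hin : ∀ i (x : EuclideanSpace ℝ (Fin n)),
      inner ℝ (e i : EuclideanSpace ℝ (Fin n)) x = ∑ j, f i j * x j := by
    intro i x
    rw [PiLp.inner_apply, hf]
    exact Finset.sum_congr rfl fun j _ => by
      simp only [RCLike.inner_apply, conj_trivial]; exact mul_comm _ _
  refine ⟨_, Matrix.of f, hdim, ?_, fun y => ?_⟩
  · ext i j
    rw [Matrix.one_apply, ← orthonormal_iff_ite.mp e.orthonormal i j, Submodule.coe_inner, hin,
      Matrix.mul_apply]
    simp only [Matrix.transpose_apply, Matrix.of_apply, hf]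
  · have h1 := e.sum_repr' ⟨_, hmemV y⟩
    have h2 := congrArg (fun z : V => WithLp.ofLp (z : EuclideanSpace ℝ (Fin n))) h1
    simp only [Submodule.coe_sum, Submodule.coe_smul, WithLp.ofLp_sum, WithLp.ofLp_smul,
      Submodule.coe_inner, hin, ← hf] at h2
    refine Eq.trans ?_ h2
    ext j
    simp only [Finset.sum_apply, Pi.smul_apply, smul_eq_mul, Matrix.mulVec, dotProduct,
      Matrix.transpose_apply, Matrix.of_apply]
    exact Finset.sum_congr rfl fun i _ => mul_comm _ _

/-- A fixed matrix of rank at most `r` can be spectrally close to the plants of only an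
exponentially small fraction of the sign pairs: closeness forces `u` to have half of its energy in
the column space. -/
lemma card_close_le {n r : ℕ} (hn : 0 < n) (B : Matrix (Fin n) (Fin n) ℝ) (hB : B.rank ≤ r)
    {s η : ℝ} (hs : 0 < s) (hη : 2 * η ≤ s * n) (F : Finset (SignPair n))
    (hF : ∀ w ∈ F, specNorm (plantMat s w - B) ≤ η) :
    (F.card : ℝ) ≤ Fintype.card (SignPair n) * Real.exp (-((n : ℝ) / 8 - r / 2)) := by
  have hn' : (0 : ℝ) < n := by exact_mod_cast hn
  obtain ⟨d, T, hd, hTT, hTB⟩ := exists_colspace_basis B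
  have hdim : d ≤ r := hd.trans_le hB
  have hhalf : ∀ w ∈ F, (n : ℝ) / 2 ≤ sqNorm (T.mulVec (sgn w.1)) := by
    intro w hw
    set u := sgn w.1 with hu
    set z := u - Tᵀ.mulVec (T.mulVec u) with hz
    have hTz : T.mulVec z = 0 := by
      rw [hz, Matrix.mulVec_sub, Matrix.mulVec_mulVec, hTT, Matrix.one_mulVec, sub_self]
    have hzB : z ⬝ᵥ B.mulVec (sgn w.2) = 0 := by
      rw [← hTB, Matrix.dotProduct_mulVec, Matrix.vecMul_transpose, hTz, zero_dotProduct]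
    have hzz : z ⬝ᵥ u = sqNorm z := by
      have : z ⬝ᵥ Tᵀ.mulVec (T.mulVec u) = 0 := by
        rw [Matrix.dotProduct_mulVec, Matrix.vecMul_transpose, hTz, zero_dotProduct]
      have h2 : u = z + Tᵀ.mulVec (T.mulVec u) := by rw [hz]; abel
      conv_lhs => rw [h2]
      rw [dotProduct_add, this, add_zero, sqNorm_eq_dot]
    have hzu : z ⬝ᵥ u = n - sqNorm (T.mulVec u) := by
      rw [hz, sub_dotProduct, ← sqNorm_eq_dot, hu, sqNorm_sgn, dotProduct_comm,
        Matrix.dotProduct_mulVec, Matrix.vecMul_transpose, ← sqNorm_eq_dot]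
    have h1 := bilin_le (plantMat s w - B) z (sgn w.2)
    rw [Matrix.sub_mulVec, dotProduct_sub, hzB, plantMat_mulVec, dotProduct_smul, ← hu, hzz,
      ← sqNorm_eq_dot, sqNorm_sgn, sub_zero, smul_eq_mul] at h1
    have h2 := hF w hw
    have hsn : 0 < √(n : ℝ) := Real.sqrt_pos.mpr hn'
    have hsn2 : √(n : ℝ) * √(n : ℝ) = n := Real.mul_self_sqrt hn'.le
    have hz0 := Real.sqrt_nonneg (sqNorm z)
    have hz2 : √(sqNorm z) * √(sqNorm z) = sqNorm z := Real.mul_self_sqrt (sqNorm_nonneg z)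
    have h3 : s * n * sqNorm z ≤ (s * n / 2) * √(sqNorm z) * √n := by
      refine h1.trans ?_
      gcongr
      linarith
    have h4 : sqNorm z ≤ (1 / 2) * (√(sqNorm z) * √n) := by
      have hsp : 0 < s * n := by positivity
      nlinarith
    have h5 : sqNorm z ≤ n / 2 := by
      nlinarith [sq_nonneg (√(sqNorm z) - √n)]
    rw [← hzz, hzu] at h5
    linarith
  have hmgf := sum_exp_quad_le T (lam := 1 / 4) (κ := 1) (by norm_num)
    (fun x => by rw [one_mul]; exact sqNorm_mulVec_le T hTT x) (by norm_num)
  rw [frobSq_of_orthonormal T hTT, Fintype.card_fin] at hmgf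
  have hsum : ∑ w : SignPair n, Real.exp (1 / 4 * sqNorm (T.mulVec (sgn w.1)))
      ≤ Fintype.card (SignPair n) * Real.exp ((r : ℝ) / 2) := by
    rw [Fintype.sum_prod_type]
    simp only [Finset.sum_const, Finset.card_univ, Fintype.card_fun, Fintype.card_bool,
      Fintype.card_fin, nsmul_eq_mul]
    rw [← Finset.mul_sum, card_signPair, mul_assoc]
    push_cast
    refine mul_le_mul_of_nonneg_left (hmgf.trans ?_) (by positivity)
    have : (d : ℝ) ≤ r := by exact_mod_cast hdim
    gcongr
    linarith
  refine (card_le_of_sum_exp _ (by norm_num) hsum F hhalf).trans (le_of_eq ?_)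
  rw [mul_assoc, ← Real.exp_add]
  congr 2; ring

/-! ### The spectral norm of a Gaussian matrix -/

/-- The standard Gaussian measure on `ℝ^N`. -/
abbrev gam (N : ℕ) : Measure (Fin N → ℝ) := Measure.pi fun _ => gaussianReal 0 1

lemma gam_linear_tail {N : ℕ} (c : Fin N → ℝ) {θ x : ℝ} (hθ : 0 ≤ θ) :
    gam N {g | x ≤ c ⬝ᵥ g} ≤ ENNReal.ofReal (Real.exp (θ ^ 2 * sqNorm c / 2 - θ * x)) := by
  have hprod : ∀ g : Fin N → ℝ, Real.exp (θ * (c ⬝ᵥ g)) = ∏ i, Real.exp ((θ * c i) * g i) := by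
    intro g
    rw [← Real.exp_sum, dotProduct, Finset.mul_sum]
    simp [mul_assoc]
  have hint : Integrable (fun g : Fin N → ℝ => Real.exp (θ * (c ⬝ᵥ g))) (gam N) := by
    simp only [hprod]
    exact Integrable.fintype_prod (f := fun i y => Real.exp ((θ * c i) * y))
      fun i => gaussian_exp_mul_integrable _
  have h := measure_ge_le_exp_mul_mgf (μ := gam N) (X := fun g => c ⬝ᵥ g) x hθ hint
  have hm : mgf (fun g : Fin N → ℝ => c ⬝ᵥ g) (gam N) θ = Real.exp (θ ^ 2 * sqNorm c / 2) := by
    simp only [mgf, hprod]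
    rw [integral_fintype_prod_eq_prod (f := fun i y => Real.exp ((θ * c i) * y))]
    simp only [gaussian_exp_mul]
    rw [← Real.exp_sum]
    simp [sqNorm, mul_pow, Finset.mul_sum, Finset.sum_div]
  rw [hm, ← Real.exp_add] at h
  rw [← ENNReal.ofReal_toReal (measure_ne_top (gam N) _)]
  apply ENNReal.ofReal_le_ofReal
  refine h.trans (le_of_eq ?_)
  congr 1; ring

/-- The `n × n` matrix with a given flattening. -/
def unvec {n : ℕ} (g : Fin (n * n) → ℝ) : Matrix (Fin n) (Fin n) ℝ :=
  Matrix.of fun i j => g (finProdFinEquiv (i, j))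

lemma vec_unvec {n : ℕ} (g : Fin (n * n) → ℝ) : _root_.vec n (unvec g) = g := by
  ext l
  change g (finProdFinEquiv (finProdFinEquiv.symm l)) = g l
  rw [Equiv.apply_symm_apply]

lemma vec_add' {n : ℕ} (A B : Matrix (Fin n) (Fin n) ℝ) :
    _root_.vec n (A + B) = _root_.vec n A + _root_.vec n B := by
  ext l; simp [_root_.vec]

lemma bilin_unvec {n : ℕ} (g : Fin (n * n) → ℝ) (x y : Fin n → ℝ) :
    x ⬝ᵥ (unvec g).mulVec y = tensor x y ⬝ᵥ g := by
  simp only [dotProduct, Matrix.mulVec, unvec, Matrix.of_apply]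
  rw [sum_fin_mul]
  simp only [tensor_apply, Finset.mul_sum]
  exact Finset.sum_congr rfl fun i _ => Finset.sum_congr rfl fun j _ => by ring

/-- The point of the grid `(1/n)ℤ^n ∩ [-1,1]^n` encoded by `z`. -/
def gridPt {n : ℕ} (z : Fin n → Fin (2 * n + 1)) : Fin n → ℝ :=
  fun i => ((z i : ℕ) - (n : ℝ)) / n

lemma exists_gridPt {n : ℕ} (hn : 0 < n) (x : Fin n → ℝ) (hx : sqNorm x ≤ 1) :
    ∃ z, sqNorm (x - gridPt z) ≤ 1 / n := by
  have hn' : (0 : ℝ) < n := by exact_mod_cast hn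
  have hxi : ∀ i, |x i| ≤ 1 := by
    intro i
    have : x i ^ 2 ≤ 1 := (Finset.single_le_sum (f := fun i => x i ^ 2)
      (fun _ _ => sq_nonneg _) (Finset.mem_univ i)).trans hx
    exact (sq_le_one_iff_abs_le_one _).mp this
  have hlt : ∀ i, ⌊n * (x i + 1)⌋₊ < 2 * n + 1 := by
    intro i
    have h1 := (abs_le.mp (hxi i)).2
    refine Nat.lt_succ_of_le (Nat.floor_le_of_le ?_)
    push_cast; nlinarith
  refine ⟨fun i => ⟨⌊n * (x i + 1)⌋₊, hlt i⟩, ?_⟩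
  have hi : ∀ i, (x i - ((⌊n * (x i + 1)⌋₊ : ℝ) - n) / n) ^ 2 ≤ 1 / n ^ 2 := by
    intro i
    have h1 := (abs_le.mp (hxi i)).1
    have h0 : 0 ≤ n * (x i + 1) := mul_nonneg hn'.le (by linarith)
    have h2 := Nat.floor_le h0
    have h3 := Nat.lt_floor_add_one (n * (x i + 1))
    have e : x i - ((⌊n * (x i + 1)⌋₊ : ℝ) - n) / n
        = (n * (x i + 1) - ⌊n * (x i + 1)⌋₊) / n := by field_simp; ring
    rw [e, div_pow]
    gcongr
    nlinarith
  calc sqNorm _ ≤ ∑ _i : Fin n, 1 / (n : ℝ) ^ 2 := Finset.sum_le_sum fun i _ => hi i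
    _ = 1 / n := by simp; field_simp

lemma sqrt_sqNorm_add_le {n : ℕ} (x y : Fin n → ℝ) :
    √(sqNorm (x + y)) ≤ √(sqNorm x) + √(sqNorm y) := by
  have key : ∀ y : Fin n → ℝ, ‖WithLp.toLp 2 y‖ = √(sqNorm y) := fun y => by
    rw [EuclideanSpace.norm_eq]; simp [sqNorm]
  rw [← key, ← key, ← key, WithLp.toLp_add]
  exact norm_add_le _ _

/-- Discretization of the spectral norm by the grid. -/
lemma specNorm_le_of_grid {n : ℕ} (hn : 16 ≤ n) (A : Matrix (Fin n) (Fin n) ℝ) {c : ℝ}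
    (hc : 0 ≤ c)
    (h : ∀ z z' : Fin n → Fin (2 * n + 1), sqNorm (gridPt z) ≤ 2 → sqNorm (gridPt z') ≤ 2 →
      gridPt z ⬝ᵥ A.mulVec (gridPt z') ≤ c) :
    specNorm A ≤ 3 * c := by
  have hn' : (16 : ℝ) ≤ n := by exact_mod_cast hn
  have hA := specNorm_nonneg A
  have hgrid : ∀ x : Fin n → ℝ, sqNorm x ≤ 1 → ∃ z,
      √(sqNorm (x - gridPt z)) ≤ 1 / 4 ∧ √(sqNorm (gridPt z)) ≤ 5 / 4 ∧
      sqNorm (gridPt z) ≤ 2 := by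
    intro x hx
    obtain ⟨z, hz⟩ := exists_gridPt (by omega) x hx
    have h1 : √(sqNorm (x - gridPt z)) ≤ 1 / 4 := by
      apply Real.sqrt_le_iff.mpr
      refine ⟨by norm_num, hz.trans ?_⟩
      rw [div_le_iff₀ (by linarith)]; linarith
    have h2 : √(sqNorm (gridPt z)) ≤ 5 / 4 := by
      have h3 := sqrt_sqNorm_add_le x (-(x - gridPt z))
      have h4 : sqNorm (-(x - gridPt z)) = sqNorm (x - gridPt z) := by
        simp only [sqNorm, Pi.neg_apply, neg_sq]
      rw [h4, show x + -(x - gridPt z) = gridPt z by abel] at h3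
      have h5 := Real.sqrt_le_one.mpr hx
      linarith
    refine ⟨z, h1, h2, ?_⟩
    have := Real.mul_self_sqrt (sqNorm_nonneg (gridPt z))
    nlinarith [Real.sqrt_nonneg (sqNorm (gridPt z))]
  have hmain : specNorm A ≤ c + 9 / 16 * specNorm A := by
    refine specNorm_le_of_bilin A (by positivity) fun x y hx hy => ?_
    obtain ⟨z, hz1, hz2, hz3⟩ := hgrid x hx
    obtain ⟨z', hz1', hz2', hz3'⟩ := hgrid y hy
    have e : x ⬝ᵥ A.mulVec y = gridPt z ⬝ᵥ A.mulVec (gridPt z')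
        + (x - gridPt z) ⬝ᵥ A.mulVec y + gridPt z ⬝ᵥ A.mulVec (y - gridPt z') := by
      rw [Matrix.mulVec_sub, dotProduct_sub, sub_dotProduct]; ring
    have b1 := bilin_le A (x - gridPt z) y
    have b2 := bilin_le A (gridPt z) (y - gridPt z')
    have hy' := Real.sqrt_le_one.mpr hy
    have c1 : specNorm A * √(sqNorm (x - gridPt z)) * √(sqNorm y) ≤ specNorm A * (1 / 4) * 1 := by
      gcongr
    have c2 : specNorm A * √(sqNorm (gridPt z)) * √(sqNorm (y - gridPt z'))
        ≤ specNorm A * (5 / 4) * (1 / 4) := by gcongr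
    have := h z z' hz3 hz3'
    rw [e]; linarith
  linarith

/-- With the logarithmic loss of the crude grid, `‖G‖ ≤ 3 √(40 n log n)` with high probability. -/
lemma gaussian_specNorm_tail {n : ℕ} (hn : 16 ≤ n) :
    gam (n * n) {g | ¬ specNorm (unvec g) ≤ 3 * √(40 * n * Real.log n)} ≤ 1 / 10 := by
  have hn' : (16 : ℝ) ≤ n := by exact_mod_cast hn
  have hlog : 1 ≤ Real.log n := by
    rw [Real.le_log_iff_exp_le (by linarith)]
    linarith [Real.exp_one_lt_d9]
  set c := √(40 * n * Real.log n) with hc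
  have hc2 : c ^ 2 = 40 * n * Real.log n := Real.sq_sqrt (by positivity)
  set G : Finset ((Fin n → Fin (2 * n + 1)) × (Fin n → Fin (2 * n + 1))) :=
    Finset.univ.filter fun z => sqNorm (gridPt z.1) ≤ 2 ∧ sqNorm (gridPt z.2) ≤ 2 with hG
  have hsub : {g | ¬ specNorm (unvec g) ≤ 3 * c} ⊆
      ⋃ z ∈ G, {g | c ≤ tensor (gridPt z.1) (gridPt z.2) ⬝ᵥ g} := by
    intro g hg
    by_contra hcon
    simp only [Set.mem_iUnion, not_exists] at hcon
    refine hg (specNorm_le_of_grid hn _ (Real.sqrt_nonneg _) fun z z' h1 h2 => ?_)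
    rw [bilin_unvec]
    have := hcon (z, z') (by simp [hG, h1, h2])
    exact (not_le.mp this).le
  refine (measure_mono hsub).trans ((measure_biUnion_finset_le _ _).trans ?_)
  have hterm : ∀ z ∈ G, gam (n * n) {g | c ≤ tensor (gridPt z.1) (gridPt z.2) ⬝ᵥ g}
      ≤ ENNReal.ofReal (Real.exp (-(5 * n * Real.log n))) := by
    intro z hz
    have hz' : sqNorm (gridPt z.1) ≤ 2 ∧ sqNorm (gridPt z.2) ≤ 2 := by simpa [hG] using hz
    refine (gam_linear_tail _ (θ := c / 4) (by positivity)).trans ?_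
    apply ENNReal.ofReal_le_ofReal
    apply Real.exp_le_exp.mpr
    have : sqNorm (tensor (gridPt z.1) (gridPt z.2)) ≤ 4 := by
      rw [sqNorm_tensor]
      nlinarith [sqNorm_nonneg (gridPt z.1), sqNorm_nonneg (gridPt z.2)]
    nlinarith [sq_nonneg (c / 4)]
  refine (Finset.sum_le_sum hterm).trans ?_
  rw [Finset.sum_const, nsmul_eq_mul]
  have hcard : (G.card : ℝ) ≤ Real.exp (4 * n * Real.log n) := by
    have h1 : G.card ≤ (2 * n + 1) ^ n * (2 * n + 1) ^ n := by
      refine (Finset.card_le_univ _).trans (le_of_eq ?_)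
      simp
    have h2 : (2 * n + 1) ^ n * (2 * n + 1) ^ n ≤ n ^ (4 * n) := by
      have : 2 * n + 1 ≤ n ^ 2 := by nlinarith
      calc (2 * n + 1) ^ n * (2 * n + 1) ^ n ≤ (n ^ 2) ^ n * (n ^ 2) ^ n := by gcongr
        _ = n ^ (4 * n) := by rw [← pow_mul, ← pow_add]; congr 1; ring
    have h3 : Real.exp (4 * n * Real.log n) = (n : ℝ) ^ (4 * n) := by
      rw [show (4 * n * Real.log n : ℝ) = ((4 * n : ℕ) : ℝ) * Real.log n by push_cast; ring,
        Real.exp_nat_mul, Real.exp_log (by linarith)]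
    rw [h3]
    exact_mod_cast h1.trans h2
  have hfin : (G.card : ℝ) * Real.exp (-(5 * n * Real.log n)) ≤ 1 / 10 := by
    calc (G.card : ℝ) * Real.exp (-(5 * n * Real.log n))
        ≤ Real.exp (4 * n * Real.log n) * Real.exp (-(5 * n * Real.log n)) := by gcongr
      _ = Real.exp (-(n * Real.log n)) := by rw [← Real.exp_add]; congr 1; ring
      _ ≤ 1 / 10 := by
        rw [Real.exp_neg, ← one_div]
        apply one_div_le_one_div_of_le (by norm_num)
        have := Real.add_one_le_exp (n * Real.log n)
        nlinarith
  have : (G.card : ℝ≥0∞) = ENNReal.ofReal G.card := by simp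
  rw [this, ← ENNReal.ofReal_mul (by positivity)]
  refine (ENNReal.ofReal_le_ofReal hfin).trans (le_of_eq ?_)
  rw [ENNReal.ofReal_div_of_pos (by norm_num)]; simp

/-! ### Rotation and translation of the Gaussian measure -/

lemma gam_char {N : ℕ} (l : Fin N → ℝ) :
    ∫ g, Complex.exp (((l ⬝ᵥ g : ℝ) : ℂ) * Complex.I) ∂(gam N)
      = Complex.exp (-((sqNorm l : ℝ) : ℂ) / 2) := by
  have h1 : ∀ g : Fin N → ℝ, Complex.exp (((l ⬝ᵥ g : ℝ) : ℂ) * Complex.I)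
      = ∏ i, Complex.exp (l i * g i * Complex.I) := by
    intro g
    rw [← Complex.exp_sum, dotProduct]
    push_cast
    rw [Finset.sum_mul]
  simp only [h1]
  rw [integral_fintype_prod_eq_prod (f := fun i (y : ℝ) => Complex.exp (l i * y * Complex.I))]
  have h2 : ∀ i, ∫ y : ℝ, Complex.exp (l i * y * Complex.I) ∂(gaussianReal 0 1)
      = Complex.exp (-((l i ^ 2 : ℝ) : ℂ) / 2) := by
    intro i
    rw [← charFun_apply_real, charFun_gaussianReal]
    congr 1; push_cast; ring
  simp only [h2]
  rw [← Complex.exp_sum, sqNorm]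
  congr 1
  push_cast
  rw [← Finset.sum_div, Finset.sum_neg_distrib]

/-- Replacing the component of `a` in the row space of `Q` by `r`. -/
def splice {N k : ℕ} (Q : Matrix (Fin k) (Fin N) ℝ) (x : (Fin k → ℝ) × (Fin N → ℝ)) : Fin N → ℝ :=
  x.2 + Qᵀ.mulVec (x.1 - Q.mulVec x.2)

lemma measurable_splice {N k : ℕ} (Q : Matrix (Fin k) (Fin N) ℝ) : Measurable (splice Q) := by
  have : Continuous (splice Q) := by
    unfold splice
    fun_prop
  exact this.measurable

/-- A Gaussian vector stays Gaussian when its measured component is resampled independently. -/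
lemma map_splice {N k : ℕ} (Q : Matrix (Fin k) (Fin N) ℝ) (hQ : Q * Qᵀ = 1) :
    ((gam k).prod (gam N)).map (splice Q) = gam N := by
  have := Measure.isProbabilityMeasure_map (μ := (gam k).prod (gam N))
    (measurable_splice Q).aemeasurable
  apply Measure.ext_of_charFunDual
  ext L
  set l : Fin N → ℝ := fun j => L (Pi.single j 1) with hl
  have hL : ∀ g, L g = l ⬝ᵥ g := by
    intro g
    conv_lhs => rw [pi_eq_sum_univ' g]
    simp only [map_sum, map_smul, dotProduct, hl, smul_eq_mul]
    exact Finset.sum_congr rfl fun j _ => mul_comm _ _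
  simp only [charFunDual_apply, hL]
  rw [integral_map (measurable_splice Q).aemeasurable (by
    refine Measurable.aestronglyMeasurable ?_
    have : Continuous fun g : Fin N → ℝ => Complex.exp (((l ⬝ᵥ g : ℝ) : ℂ) * Complex.I) := by
      fun_prop
    exact this.measurable)]
  have hs : ∀ x : (Fin k → ℝ) × (Fin N → ℝ), l ⬝ᵥ splice Q x
      = Q.mulVec l ⬝ᵥ x.1 + (l - Qᵀ.mulVec (Q.mulVec l)) ⬝ᵥ x.2 := by
    intro x
    have e1 : ∀ y : Fin k → ℝ, l ⬝ᵥ Qᵀ.mulVec y = Q.mulVec l ⬝ᵥ y := fun y => by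
      rw [Matrix.dotProduct_mulVec, Matrix.vecMul_transpose]
    have e2 : Qᵀ.mulVec (Q.mulVec l) ⬝ᵥ x.2 = Q.mulVec l ⬝ᵥ Q.mulVec x.2 := by
      rw [dotProduct_comm, Matrix.dotProduct_mulVec, Matrix.vecMul_transpose, dotProduct_comm]
    rw [splice, dotProduct_add, e1, dotProduct_sub, sub_dotProduct, e2]; ring
  simp only [hs, Complex.ofReal_add, add_mul, Complex.exp_add]
  rw [integral_prod_mul (fun r : Fin k → ℝ => Complex.exp (((Q.mulVec l ⬝ᵥ r : ℝ) : ℂ) * Complex.I))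
    (fun a : Fin N → ℝ => Complex.exp
      ((((l - Qᵀ.mulVec (Q.mulVec l)) ⬝ᵥ a : ℝ) : ℂ) * Complex.I)), gam_char, gam_char, gam_char,
    ← Complex.exp_add]
  congr 1
  have hpyth : sqNorm (Q.mulVec l) + sqNorm (l - Qᵀ.mulVec (Q.mulVec l)) = sqNorm l := by
    have e3 : l ⬝ᵥ Qᵀ.mulVec (Q.mulVec l) = Q.mulVec l ⬝ᵥ Q.mulVec l := by
      rw [Matrix.dotProduct_mulVec, Matrix.vecMul_transpose]
    have e4 : Qᵀ.mulVec (Q.mulVec l) ⬝ᵥ Qᵀ.mulVec (Q.mulVec l) = Q.mulVec l ⬝ᵥ Q.mulVec l := by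
      rw [Matrix.dotProduct_mulVec, Matrix.vecMul_transpose, Matrix.mulVec_mulVec, hQ,
        Matrix.one_mulVec]
    rw [sqNorm_eq_dot, sqNorm_eq_dot, sqNorm_eq_dot, sub_dotProduct, dotProduct_sub, dotProduct_sub,
      e3, e4, dotProduct_comm (Qᵀ.mulVec (Q.mulVec l)) l, e3]
    ring
  rw [← hpyth]; push_cast; ring

/-- One-dimensional Cameron–Martin formula. -/
lemma gaussianReal_shift (c : ℝ) :
    gaussianReal c 1 = (gaussianReal 0 1).withDensity
      (fun y => ENNReal.ofReal (Real.exp (y * c - c ^ 2 / 2))) := by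
  rw [gaussianReal_of_var_ne_zero _ one_ne_zero, gaussianReal_of_var_ne_zero _ one_ne_zero,
    ← withDensity_mul _ (measurable_gaussianPDF _ _) (by fun_prop)]
  congr 1
  ext y
  simp only [Pi.mul_apply, gaussianPDF_def, gaussianPDFReal_def]
  rw [← ENNReal.ofReal_mul (by positivity), mul_assoc (_⁻¹), ← Real.exp_add]
  congr 3
  simp; ring

/-- Cameron–Martin formula for the standard Gaussian measure. -/
lemma gam_shift {k : ℕ} (c : Fin k → ℝ) :
    (gam k).map (fun r => c + r) = (gam k).withDensity
      (fun r => ENNReal.ofReal (Real.exp (r ⬝ᵥ c - sqNorm c / 2))) := by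
  have h1 : (gam k).map (fun r => c + r) = Measure.pi fun i => gaussianReal (c i) 1 := by
    have := Measure.pi_map_pi (μ := fun _ : Fin k => gaussianReal 0 1)
      (f := fun i y => c i + y) (fun i => by fun_prop)
    simp only [gaussianReal_map_const_add, zero_add] at this
    rw [← this]; rfl
  rw [h1]
  apply Measure.pi_eq
  intro s hs
  rw [withDensity_apply _ (MeasurableSet.univ_pi hs), ← lintegral_indicator (MeasurableSet.univ_pi hs)]
  have h2 : ∀ r : Fin k → ℝ, (Set.univ.pi s).indicator
      (fun r => ENNReal.ofReal (Real.exp (r ⬝ᵥ c - sqNorm c / 2))) r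
      = ∏ i, (s i).indicator (fun y => ENNReal.ofReal (Real.exp (y * c i - c i ^ 2 / 2))) (r i) := by
    intro r
    by_cases hr : r ∈ Set.univ.pi s
    · rw [Set.indicator_of_mem hr]
      have : ∀ i, (s i).indicator (fun y => ENNReal.ofReal (Real.exp (y * c i - c i ^ 2 / 2))) (r i)
          = ENNReal.ofReal (Real.exp (r i * c i - c i ^ 2 / 2)) := fun i =>
        Set.indicator_of_mem (hr i (Set.mem_univ i)) _
      simp only [this]
      rw [← ENNReal.ofReal_prod_of_nonneg fun i _ => (Real.exp_pos _).le, ← Real.exp_sum,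
        Finset.sum_sub_distrib, ← Finset.sum_div]
      rfl
    · rw [Set.indicator_of_notMem hr]
      simp only [Set.mem_univ_pi, not_forall] at hr
      obtain ⟨i, hi⟩ := hr
      exact (Finset.prod_eq_zero (Finset.mem_univ i) (Set.indicator_of_notMem hi _)).symm
  simp only [h2]
  have hm : ∀ i, Measurable ((s i).indicator
      (fun y => ENNReal.ofReal (Real.exp (y * c i - c i ^ 2 / 2)))) := fun i =>
    Measurable.indicator (by fun_prop) (hs i)
  rw [lintegral_prod_eq_prod_lintegral_of_indepFun Finset.univ
    (fun i (r : Fin k → ℝ) => (s i).indicator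
      (fun y => ENNReal.ofReal (Real.exp (y * c i - c i ^ 2 / 2))) (r i))
    (iIndepFun_pi fun i => (hm i).aemeasurable) (fun i => (hm i).comp (measurable_pi_apply i))]
  refine Finset.prod_congr rfl fun i _ => ?_
  rw [(measurePreserving_eval (fun _ : Fin k => gaussianReal 0 1) i).lintegral_comp (hm i),
    lintegral_indicator (hs i), gaussianReal_shift (c i), withDensity_apply _ (hs i)]

lemma lintegral_gam_shift {k : ℕ} (c : Fin k → ℝ) {f : (Fin k → ℝ) → ℝ≥0∞} (hf : Measurable f) :
    ∫⁻ r, f (c + r) ∂(gam k)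
      = ∫⁻ r, ENNReal.ofReal (Real.exp (r ⬝ᵥ c - sqNorm c / 2)) * f r ∂(gam k) := by
  rw [← lintegral_map (g := fun r => c + r) hf (by fun_prop), gam_shift,
    lintegral_withDensity_eq_lintegral_mul _ _ hf]
  · rfl
  · have : Continuous fun r : Fin k → ℝ => Real.exp (r ⬝ᵥ c - sqNorm c / 2) := by fun_prop
    exact this.measurable.ennreal_ofReal

/-! ### The law of the transcript -/

namespace QueryMaps

variable {N k t : ℕ}

/-- The rounds of a transcript that precede round `j`. -/
def past (ρ : Fin t → Fin k → ℝ) (j : Fin t) : Fin (j : ℕ) → Fin k → ℝ :=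
  fun i => ρ ⟨i.1, i.isLt.trans j.isLt⟩

lemma resp_eq (Q : QueryMaps N k t) (a : Fin N → ℝ) (j : Fin t) :
    resp Q a j = (Q j (past (resp Q a) j)).mulVec a := by
  rw [resp]; rfl

/-- The energy of `b` captured in round `j` by the queries asked along the transcript `ρ`. -/
def roundEnergy (Q : QueryMaps N k t) (b : Fin N → ℝ) (ρ : Fin t → Fin k → ℝ) (j : Fin t) : ℝ :=
  sqNorm ((Q j (past ρ j)).mulVec b)

/-- The energy of `b` captured by all the queries asked along the transcript `ρ`. -/
def energy (Q : QueryMaps N k t) (b : Fin N → ℝ) (ρ : Fin t → Fin k → ℝ) : ℝ :=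
  ∑ j, roundEnergy Q b ρ j

/-- The likelihood ratio at the transcript `ρ` between the inputs `b + g` and pure Gaussian
transcripts. -/
def lik (Q : QueryMaps N k t) (b : Fin N → ℝ) (ρ : Fin t → Fin k → ℝ) : ℝ :=
  Real.exp (∑ j, (ρ j ⬝ᵥ (Q j (past ρ j)).mulVec b - roundEnergy Q b ρ j / 2))

/-- The queries asked after round one, when the first response is `r`. -/
def tail (Q : QueryMaps N k (t + 1)) (r : Fin k → ℝ) : QueryMaps N k t :=
  fun j h => Q j.succ (Fin.cons (α := fun _ => Fin k → ℝ) r h : Fin ((j : ℕ) + 1) → Fin k → ℝ)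

/-- The queries of the first round. -/
def head (Q : QueryMaps N k (t + 1)) : Matrix (Fin k) (Fin N) ℝ :=
  Q 0 fun i => i.elim0

lemma past_zero_query (Q : QueryMaps N k (t + 1)) (h : Fin ((0 : Fin (t + 1)) : ℕ) → Fin k → ℝ) :
    Q 0 h = head Q := by
  unfold head; congr 1; funext i; exact i.elim0

lemma past_cons (r : Fin k → ℝ) (ρ : Fin t → Fin k → ℝ) (j : Fin t) :
    past (Fin.cons (α := fun _ => Fin k → ℝ) r ρ : Fin (t + 1) → Fin k → ℝ) j.succ
      = (Fin.cons (α := fun _ => Fin k → ℝ) r (past ρ j) : Fin ((j : ℕ) + 1) → Fin k → ℝ) := by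
  funext i
  refine Fin.cases ?_ (fun i => ?_) i
  · rfl
  · rfl

lemma resp_cons (Q : QueryMaps N k (t + 1)) (a : Fin N → ℝ) :
    resp Q a = Fin.cons (α := fun _ => Fin k → ℝ) ((head Q).mulVec a)
      (resp (tail Q ((head Q).mulVec a)) a) := by
  have key : ∀ m : ℕ, ∀ j : Fin (t + 1), (j : ℕ) = m →
      resp Q a j = (Fin.cons (α := fun _ => Fin k → ℝ) ((head Q).mulVec a)
      (resp (tail Q ((head Q).mulVec a)) a) : Fin (t + 1) → Fin k → ℝ) j := by
    intro m
    induction m using Nat.strong_induction_on with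
    | _ m ih =>
      intro j hj
      rw [resp_eq]
      revert hj
      refine Fin.cases (fun _ => ?_) (fun j hj => ?_) j
      · exact congrArg (fun M => M.mulVec a) (past_zero_query Q _)
      · have hp : past (resp Q a) j.succ
            = past (Fin.cons (α := fun _ => Fin k → ℝ) ((head Q).mulVec a)
              (resp (tail Q ((head Q).mulVec a)) a) : Fin (t + 1) → Fin k → ℝ) j.succ := by
          funext i
          exact ih i.1 (hj ▸ i.isLt) ⟨i.1, i.isLt.trans j.succ.isLt⟩ rfl
        rw [hp, past_cons, Fin.cons_succ, resp_eq]
        rfl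
  funext j
  exact key _ j rfl

lemma resp_congr (Q : QueryMaps N k t) {a a' : Fin N → ℝ}
    (h : ∀ j h, (Q j h).mulVec a = (Q j h).mulVec a') : resp Q a = resp Q a' := by
  have key : ∀ m : ℕ, ∀ j : Fin t, (j : ℕ) = m → resp Q a j = resp Q a' j := by
    intro m
    induction m using Nat.strong_induction_on with
    | _ m ih =>
      intro j hj
      rw [resp_eq, resp_eq, h]
      congr 2
      funext i
      exact ih i.1 (hj ▸ i.isLt) ⟨i.1, i.isLt.trans j.isLt⟩ rfl
  funext j
  exact key _ j rfl

lemma measurable_cons (r : Fin k → ℝ) (m : ℕ) :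
    Measurable fun h : Fin m → Fin k → ℝ =>
      (Fin.cons (α := fun _ => Fin k → ℝ) r h : Fin (m + 1) → Fin k → ℝ) := by
  refine measurable_pi_lambda _ fun i => ?_
  refine Fin.cases ?_ (fun i => ?_) i
  · exact measurable_const
  · exact measurable_pi_apply i

lemma measurable_cons' (m : ℕ) :
    Measurable fun x : (Fin k → ℝ) × (Fin m → Fin k → ℝ) =>
      (Fin.cons (α := fun _ => Fin k → ℝ) x.1 x.2 : Fin (m + 1) → Fin k → ℝ) := by
  refine measurable_pi_lambda _ fun i => ?_
  refine Fin.cases ?_ (fun i => ?_) i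
  · exact measurable_fst
  · exact (measurable_pi_apply i).comp measurable_snd

lemma Valid.tail {Q : QueryMaps N k (t + 1)} (hQ : Q.Valid) (r : Fin k → ℝ) :
    (QueryMaps.tail Q r).Valid := by
  refine ⟨fun j i l => (hQ.1 j.succ i l).comp (measurable_cons r j),
    fun j h => hQ.2.1 j.succ _, fun j i hij h => ?_⟩
  have := hQ.2.2 j.succ i.succ (by simpa using hij)
    (Fin.cons (α := fun _ => Fin k → ℝ) r h : Fin ((j : ℕ) + 1) → Fin k → ℝ)
  refine Eq.trans ?_ this
  unfold QueryMaps.tail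
  congr 3
  funext l
  refine Fin.cases ?_ (fun l => ?_) l
  · rfl
  · rfl

lemma Valid.tail_head {Q : QueryMaps N k (t + 1)} (hQ : Q.Valid) (r : Fin k → ℝ) (j : Fin t)
    (h : Fin (j : ℕ) → Fin k → ℝ) : QueryMaps.tail Q r j h * (head Q)ᵀ = 0 := by
  have := hQ.2.2 j.succ 0 (by simp)
    (Fin.cons (α := fun _ => Fin k → ℝ) r h : Fin ((j : ℕ) + 1) → Fin k → ℝ)
  refine Eq.trans ?_ this
  exact congrArg (fun M => QueryMaps.tail Q r j h * Mᵀ) (past_zero_query Q _).symm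

lemma Valid.head {Q : QueryMaps N k (t + 1)} (hQ : Q.Valid) :
    QueryMaps.head Q * (QueryMaps.head Q)ᵀ = 1 := hQ.2.1 0 _

/-- When the noise is split into its first-round component `r` and an independent copy `g`, the
later rounds see only `g`, because their queries are orthogonal to those of the first round. -/
lemma resp_splice {Q : QueryMaps N k (t + 1)} (hQ : Q.Valid) (b : Fin N → ℝ) (r : Fin k → ℝ)
    (g : Fin N → ℝ) :
    resp Q (b + splice (QueryMaps.head Q) (r, g))
      = Fin.cons (α := fun _ => Fin k → ℝ) ((QueryMaps.head Q).mulVec b + r)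
        (resp (QueryMaps.tail Q ((QueryMaps.head Q).mulVec b + r)) (b + g)) := by
  have h0 : (QueryMaps.head Q).mulVec (b + splice (QueryMaps.head Q) (r, g))
      = (QueryMaps.head Q).mulVec b + r := by
    simp only [splice, Matrix.mulVec_add]
    rw [Matrix.mulVec_mulVec, hQ.head, Matrix.one_mulVec]; abel
  rw [resp_cons, h0]
  congr 1
  refine resp_congr _ fun j h => ?_
  simp only [splice, Matrix.mulVec_add]
  rw [Matrix.mulVec_mulVec, hQ.tail_head, Matrix.zero_mulVec, add_zero]

lemma measurable_past (j : Fin t) : Measurable fun ρ : Fin t → Fin k → ℝ => past ρ j :=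
  measurable_pi_lambda _ fun _ => measurable_pi_apply _

lemma measurable_query {Q : QueryMaps N k t} (hQ : Q.Valid) (b : Fin N → ℝ) (j : Fin t)
    (i : Fin k) : Measurable fun ρ => (Q j (past ρ j)).mulVec b i := by
  simp only [Matrix.mulVec, dotProduct]
  exact Finset.measurable_sum _ fun l _ =>
    ((hQ.1 j i l).comp (measurable_past j)).mul_const _

lemma measurable_roundEnergy {Q : QueryMaps N k t} (hQ : Q.Valid) (b : Fin N → ℝ) (j : Fin t) :
    Measurable fun ρ => roundEnergy Q b ρ j := by
  unfold roundEnergy sqNorm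
  exact Finset.measurable_sum _ fun i _ => (measurable_query hQ b j i).pow_const 2

lemma measurable_energy {Q : QueryMaps N k t} (hQ : Q.Valid) (b : Fin N → ℝ) :
    Measurable fun ρ => energy Q b ρ :=
  Finset.measurable_sum _ fun j _ => measurable_roundEnergy hQ b j

lemma measurable_logTerm {Q : QueryMaps N k t} (hQ : Q.Valid) (b : Fin N → ℝ) (j : Fin t) :
    Measurable fun ρ : Fin t → Fin k → ℝ =>
      ρ j ⬝ᵥ (Q j (past ρ j)).mulVec b - roundEnergy Q b ρ j / 2 := by
  refine Measurable.sub ?_ ((measurable_roundEnergy hQ b j).div_const _)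
  unfold dotProduct
  refine Finset.measurable_sum _ fun i _ => Measurable.mul ?_ (measurable_query hQ b j i)
  exact (measurable_pi_apply i).comp (measurable_pi_apply j)

lemma measurable_lik {Q : QueryMaps N k t} (hQ : Q.Valid) (b : Fin N → ℝ) :
    Measurable fun ρ => lik Q b ρ :=
  (Finset.measurable_sum _ fun j _ => measurable_logTerm hQ b j).exp

/-- Joint measurability of the responses in the seed and the input. -/
lemma measurable_resp_seed {X : Type*} [MeasurableSpace X] {Qf : X → QueryMaps N k t}
    (hQ : ∀ (j : Fin t) (i : Fin k) (l : Fin N),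
      Measurable fun p : X × (Fin (j : ℕ) → Fin k → ℝ) => Qf p.1 j p.2 i l) :
    Measurable fun p : X × (Fin N → ℝ) => resp (Qf p.1) p.2 := by
  have key : ∀ m : ℕ, ∀ j : Fin t, (j : ℕ) = m →
      Measurable fun p : X × (Fin N → ℝ) => resp (Qf p.1) p.2 j := by
    intro m
    induction m using Nat.strong_induction_on with
    | _ m ih =>
      intro j hj
      have hp : Measurable fun p : X × (Fin N → ℝ) => past (resp (Qf p.1) p.2) j :=
        measurable_pi_lambda _ fun i =>
          ih i.1 (hj ▸ i.isLt) ⟨i.1, i.isLt.trans j.isLt⟩ rfl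
      simp only [resp_eq]
      refine measurable_pi_lambda _ fun i => ?_
      simp only [Matrix.mulVec, dotProduct]
      exact Finset.measurable_sum _ fun l _ =>
        ((hQ j i l).comp (measurable_fst.prodMk hp)).mul
          ((measurable_pi_apply l).comp measurable_snd)
  exact measurable_pi_lambda _ fun j => key _ j rfl

lemma measurable_resp {Q : QueryMaps N k t} (hQ : Q.Valid) : Measurable fun a => resp Q a :=
  (measurable_resp_seed (X := Unit) (Qf := fun _ => Q)
    (fun j i l => (hQ.1 j i l).comp measurable_snd)).comp (measurable_prodMk_left (x := ()))

lemma lik_cons (Q : QueryMaps N k (t + 1)) (b : Fin N → ℝ) (r : Fin k → ℝ)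
    (ρ : Fin t → Fin k → ℝ) :
    lik Q b (Fin.cons (α := fun _ => Fin k → ℝ) r ρ)
      = Real.exp (r ⬝ᵥ (head Q).mulVec b - sqNorm ((head Q).mulVec b) / 2)
        * lik (tail Q r) b ρ := by
  rw [lik, lik, ← Real.exp_add, Fin.sum_univ_succ]
  simp only [roundEnergy, past_cons, past_zero_query, Fin.cons_zero, Fin.cons_succ]
  rfl

/-- The transcript on the input `b + g` has density `lik Q b` with respect to independent
standard Gaussian responses. -/
lemma lintegral_resp {Q : QueryMaps N k t} (hQ : Q.Valid) (b : Fin N → ℝ)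
    {F : (Fin t → Fin k → ℝ) → ℝ≥0∞} (hF : Measurable F) :
    ∫⁻ g, F (resp Q (b + g)) ∂(gam N)
      = ∫⁻ ρ, F ρ * ENNReal.ofReal (lik Q b ρ) ∂(Measure.pi fun _ : Fin t => gam k) := by
  induction t with
  | zero =>
    have h1 : ∀ ρ ρ' : Fin 0 → Fin k → ℝ, ρ = ρ' := fun ρ ρ' => Subsingleton.elim _ _
    have h2 : ∀ g, F (resp Q (b + g)) = F (fun i => i.elim0) := fun g => by rw [h1 (resp Q _) _]
    have h3 : ∀ ρ, F ρ * ENNReal.ofReal (lik Q b ρ) = F (fun i => i.elim0) := fun ρ => by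
      rw [h1 ρ (fun i => i.elim0)]; simp [lik]
    simp only [h2, h3, lintegral_const, measure_univ]
  | succ t ih =>
    set c := (head Q).mulVec b with hc
    have hcons := measurable_cons' (k := k) t
    have hG : Measurable fun x : (Fin k → ℝ) × (Fin t → Fin k → ℝ) =>
        F (Fin.cons (α := fun _ => Fin k → ℝ) x.1 x.2) * ENNReal.ofReal (lik (tail Q x.1) b x.2) := by
      have e : ∀ x : (Fin k → ℝ) × (Fin t → Fin k → ℝ), lik (tail Q x.1) b x.2
          = Real.exp (-(x.1 ⬝ᵥ c - sqNorm c / 2))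
            * lik Q b (Fin.cons (α := fun _ => Fin k → ℝ) x.1 x.2) := by
        intro x
        rw [lik_cons, ← mul_assoc, ← Real.exp_add, neg_add_cancel, Real.exp_zero, one_mul]
      simp only [e]
      refine (hF.comp hcons).mul (Measurable.ennreal_ofReal (Measurable.mul ?_
        ((measurable_lik hQ b).comp hcons)))
      have : Continuous fun x : (Fin k → ℝ) × (Fin t → Fin k → ℝ) =>
        Real.exp (-(x.1 ⬝ᵥ c - sqNorm c / 2)) := by fun_prop
      exact this.measurable
    have hFr : Measurable fun g => F (resp Q (b + g)) :=
      hF.comp ((measurable_resp hQ).comp (measurable_const_add b))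
    calc ∫⁻ g, F (resp Q (b + g)) ∂(gam N)
        = ∫⁻ x, F (resp Q (b + splice (head Q) x)) ∂((gam k).prod (gam N)) := by
          conv_lhs => rw [← map_splice (head Q) hQ.head]
          rw [lintegral_map hFr (measurable_splice _)]
      _ = ∫⁻ r, ∫⁻ g, F (resp Q (b + splice (head Q) (r, g))) ∂(gam N) ∂(gam k) :=
          lintegral_prod _ (hFr.comp (measurable_splice _)).aemeasurable
      _ = ∫⁻ r, ∫⁻ ρ, F (Fin.cons (α := fun _ => Fin k → ℝ) (c + r) ρ)
            * ENNReal.ofReal (lik (tail Q (c + r)) b ρ)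
            ∂(Measure.pi fun _ : Fin t => gam k) ∂(gam k) := by
          refine lintegral_congr fun r => ?_
          simp only [resp_splice hQ]
          exact ih (hQ.tail _) (F := fun ρ => F (Fin.cons (α := fun _ => Fin k → ℝ) (c + r) ρ))
            (hF.comp (measurable_cons _ _))
      _ = ∫⁻ r, ENNReal.ofReal (Real.exp (r ⬝ᵥ c - sqNorm c / 2))
            * ∫⁻ ρ, F (Fin.cons (α := fun _ => Fin k → ℝ) r ρ)
            * ENNReal.ofReal (lik (tail Q r) b ρ)
            ∂(Measure.pi fun _ : Fin t => gam k) ∂(gam k) :=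
          lintegral_gam_shift c (f := fun r => ∫⁻ ρ, F (Fin.cons (α := fun _ => Fin k → ℝ) r ρ)
            * ENNReal.ofReal (lik (tail Q r) b ρ) ∂(Measure.pi fun _ : Fin t => gam k))
            hG.lintegral_prod_right'
      _ = ∫⁻ r, ∫⁻ ρ, F (Fin.cons (α := fun _ => Fin k → ℝ) r ρ)
            * ENNReal.ofReal (lik Q b (Fin.cons (α := fun _ => Fin k → ℝ) r ρ))
            ∂(Measure.pi fun _ : Fin t => gam k) ∂(gam k) := by
          refine lintegral_congr fun r => ?_
          refine (lintegral_const_mul _ (hG.comp (measurable_prodMk_left (x := r)))).symm.trans ?_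
          refine lintegral_congr fun ρ => ?_
          simp only [Function.comp_apply]
          rw [lik_cons, ENNReal.ofReal_mul (Real.exp_pos _).le]
          ring
      _ = _ := by
          have hH : Measurable fun ρ => F ρ * ENNReal.ofReal (lik Q b ρ) :=
            hF.mul (measurable_lik hQ b).ennreal_ofReal
          have hmp := (measurePreserving_piFinSuccAbove (fun _ : Fin (t + 1) => gam k) 0).symm
          rw [← hmp.lintegral_comp hH]
          have he : ∀ (r : Fin k → ℝ) (ρ : Fin t → Fin k → ℝ),
              (Fin.cons (α := fun _ => Fin k → ℝ) r ρ : Fin (t + 1) → Fin k → ℝ)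
              = (MeasurableEquiv.piFinSuccAbove (fun _ : Fin (t + 1) => Fin k → ℝ) 0).symm (r, ρ) :=
            fun r ρ => (Fin.insertNth_zero' r ρ).symm
          simp only [he]
          exact (lintegral_prod (μ := gam k) (ν := Measure.pi fun _ : Fin t => gam k)
            (fun a => F ((MeasurableEquiv.piFinSuccAbove
            (fun _ : Fin (t + 1) => Fin k → ℝ) 0).symm a) * ENNReal.ofReal (lik Q b
            ((MeasurableEquiv.piFinSuccAbove (fun _ : Fin (t + 1) => Fin k → ℝ) 0).symm a)))
            (hH.comp hmp.measurable).aemeasurable).symm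

lemma lintegral_lik {Q : QueryMaps N k t} (hQ : Q.Valid) (b : Fin N → ℝ) :
    ∫⁻ ρ, ENNReal.ofReal (lik Q b ρ) ∂(Measure.pi fun _ : Fin t => gam k) = 1 := by
  have := lintegral_resp hQ b (F := fun _ => 1) measurable_const
  simpa using this.symm

end QueryMaps

/-! ### Information bound and the growth of the captured energy -/

namespace QueryMaps

variable {N k t : ℕ}

lemma sqNorm_smul {ι : Type*} [Fintype ι] (c : ℝ) (x : ι → ℝ) :
    sqNorm (c • x) = c ^ 2 * sqNorm x := by
  simp [sqNorm, mul_pow, Finset.mul_sum]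

/-- Doubling the signal turns the square of the likelihood ratio into a likelihood ratio again, up to
the exponential of the captured energy; this is what gives access to second moments. -/
lemma lik_sq (Q : QueryMaps N k t) (b : Fin N → ℝ) (ρ : Fin t → Fin k → ℝ) :
    lik Q b ρ ^ 2 = lik Q ((2 : ℝ) • b) ρ * Real.exp (energy Q b ρ) := by
  rw [lik, lik, ← Real.exp_add, ← Real.exp_nat_mul, energy, ← Finset.sum_add_distrib,
    Finset.mul_sum]
  congr 1
  refine Finset.sum_congr rfl fun j _ => ?_
  simp only [roundEnergy, Matrix.mulVec_smul, dotProduct_smul, sqNorm_smul, smul_eq_mul]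
  push_cast; ring

/-- If every transcript satisfies `E w` for at most a fraction `e^{-D}` of the hypotheses `w`, then
on average over `w` the event `E w` is unlikely, as long as the captured energy of the true signal
stays well below `D`. The likelihood is truncated at the level `K = e^{(m+D)/2}`, the excess being
controlled by its second moment. -/
lemma sum_measure_le {W : Type*} [Fintype W] {Q : QueryMaps N k t} (hQ : Q.Valid)
    (b : W → Fin N → ℝ) (E : W → Set (Fin t → Fin k → ℝ)) (hE : ∀ w, MeasurableSet (E w))
    (m D : ℝ)
    (hcard : ∀ ρ, ((Finset.univ.filter fun w => ρ ∈ E w).card : ℝ)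
      ≤ Fintype.card W * Real.exp (-D)) :
    ∑ w, gam N {g | resp Q (b w + g) ∈ E w ∧ energy Q (b w) (resp Q (b w + g)) ≤ m}
      ≤ ENNReal.ofReal (Fintype.card W * (2 * Real.exp ((m - D) / 2))) := by
  set K := Real.exp ((m + D) / 2) with hK
  have hK0 : 0 < K := Real.exp_pos _
  set P := Measure.pi fun _ : Fin t => gam k with hP
  have hpt : ∀ w, gam N {g | resp Q (b w + g) ∈ E w ∧ energy Q (b w) (resp Q (b w + g)) ≤ m}
      ≤ ∫⁻ ρ, (ENNReal.ofReal K * (E w).indicator 1 ρ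
        + ENNReal.ofReal (K⁻¹ * Real.exp m) * ENNReal.ofReal (lik Q ((2 : ℝ) • b w) ρ)) ∂P := by
    intro w
    set S : Set (Fin t → Fin k → ℝ) := E w ∩ {ρ | energy Q (b w) ρ ≤ m} with hS
    have hSm : MeasurableSet S :=
      (hE w).inter (measurableSet_le (measurable_energy hQ _) measurable_const)
    have hr : Measurable fun g => resp Q (b w + g) :=
      (measurable_resp hQ).comp (measurable_const_add _)
    have e1 : gam N {g | resp Q (b w + g) ∈ E w ∧ energy Q (b w) (resp Q (b w + g)) ≤ m}
        = ∫⁻ g, S.indicator 1 (resp Q (b w + g)) ∂(gam N) := by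
      have e : (fun g => S.indicator (1 : (Fin t → Fin k → ℝ) → ℝ≥0∞) (resp Q (b w + g)))
          = ((fun g => resp Q (b w + g)) ⁻¹' S).indicator 1 := by
        ext g; simp [Set.indicator]
      rw [e, lintegral_indicator_one (hr hSm)]; rfl
    rw [e1, lintegral_resp hQ (b w) (measurable_one.indicator hSm)]
    refine lintegral_mono fun ρ => ?_
    by_cases hρ : ρ ∈ S
    · rw [Set.indicator_of_mem hρ, Set.indicator_of_mem hρ.1]
      simp only [Pi.one_apply, one_mul, mul_one]
      have hl2 : 0 ≤ lik Q ((2 : ℝ) • b w) ρ := (Real.exp_pos _).le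
      rw [← ENNReal.ofReal_mul (by positivity), ← ENNReal.ofReal_add hK0.le (by positivity)]
      apply ENNReal.ofReal_le_ofReal
      have h1 : lik Q (b w) ρ ^ 2 ≤ lik Q ((2 : ℝ) • b w) ρ * Real.exp m := by
        rw [lik_sq]
        exact mul_le_mul_of_nonneg_left (Real.exp_le_exp.mpr hρ.2) hl2
      have h2 : lik Q (b w) ρ ≤ K + K⁻¹ * lik Q (b w) ρ ^ 2 := by
        have h3 : 0 < lik Q (b w) ρ := Real.exp_pos _
        have h4 : K * lik Q (b w) ρ ≤ K * (K + K⁻¹ * lik Q (b w) ρ ^ 2) := by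
          rw [mul_add, mul_inv_cancel_left₀ hK0.ne']
          nlinarith [sq_nonneg (K - lik Q (b w) ρ)]
        exact le_of_mul_le_mul_left h4 hK0
      have h5 : K⁻¹ * lik Q (b w) ρ ^ 2 ≤ K⁻¹ * (lik Q ((2 : ℝ) • b w) ρ * Real.exp m) :=
        mul_le_mul_of_nonneg_left h1 (by positivity)
      nlinarith
    · rw [Set.indicator_of_notMem hρ, zero_mul]
      exact zero_le
  have hm1 : ∀ w, Measurable fun ρ =>
      ENNReal.ofReal K * (E w).indicator (1 : (Fin t → Fin k → ℝ) → ℝ≥0∞) ρ :=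
    fun w => (measurable_one.indicator (hE w)).const_mul _
  have hsum : ∀ w, ∫⁻ ρ, (ENNReal.ofReal K * (E w).indicator 1 ρ
        + ENNReal.ofReal (K⁻¹ * Real.exp m) * ENNReal.ofReal (lik Q ((2 : ℝ) • b w) ρ)) ∂P
      = ∫⁻ ρ, ENNReal.ofReal K * (E w).indicator 1 ρ ∂P + ENNReal.ofReal (K⁻¹ * Real.exp m) := by
    intro w
    rw [lintegral_add_left (hm1 w),
      lintegral_const_mul _ (measurable_lik hQ _).ennreal_ofReal, lintegral_lik hQ, mul_one]
  have hE2 : ∑ w, ∫⁻ ρ, ENNReal.ofReal K * (E w).indicator 1 ρ ∂P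
      ≤ ENNReal.ofReal (K * (Fintype.card W * Real.exp (-D))) := by
    rw [← lintegral_finsetSum _ fun w _ => hm1 w]
    have hb : ∀ ρ, ∑ w, ENNReal.ofReal K * (E w).indicator (1 : (Fin t → Fin k → ℝ) → ℝ≥0∞) ρ
        ≤ ENNReal.ofReal (K * (Fintype.card W * Real.exp (-D))) := by
      intro ρ
      rw [← Finset.mul_sum, ENNReal.ofReal_mul hK0.le]
      gcongr
      have : ∑ w, (E w).indicator (1 : (Fin t → Fin k → ℝ) → ℝ≥0∞) ρ
          = ((Finset.univ.filter fun w => ρ ∈ E w).card : ℝ≥0∞) := by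
        simp [Set.indicator_apply]
      rw [this, ← ENNReal.ofReal_natCast]
      exact ENNReal.ofReal_le_ofReal (hcard ρ)
    refine (lintegral_mono hb).trans (le_of_eq ?_)
    simp [hP]
  refine (Finset.sum_le_sum fun w _ => (hpt w).trans_eq (hsum w)).trans ?_
  rw [Finset.sum_add_distrib, Finset.sum_const, Finset.card_univ, nsmul_eq_mul]
  refine (add_le_add_left hE2 _).trans (le_of_eq ?_)
  rw [← ENNReal.ofReal_natCast, ← ENNReal.ofReal_mul (by positivity),
    ← ENNReal.ofReal_add (by positivity) (by positivity)]
  congr 1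
  have k1 : K * Real.exp (-D) = Real.exp ((m - D) / 2) := by
    rw [hK, ← Real.exp_add]; congr 1; ring
  have k2 : K⁻¹ * Real.exp m = Real.exp ((m - D) / 2) := by
    rw [hK, ← Real.exp_neg, ← Real.exp_add]; congr 1; ring
  rw [k2, ← k1]; ring

/-- The algorithm without its last round. -/
def trunc (Q : QueryMaps N k (t + 1)) : QueryMaps N k t := fun j h => Q j.castSucc h

lemma Valid.trunc {Q : QueryMaps N k (t + 1)} (hQ : Q.Valid) : (QueryMaps.trunc Q).Valid :=
  ⟨fun j => hQ.1 j.castSucc, fun j => hQ.2.1 j.castSucc,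
    fun j i hij h => hQ.2.2 j.castSucc i.castSucc hij h⟩

lemma resp_trunc (Q : QueryMaps N k (t + 1)) (a : Fin N → ℝ) (j : Fin t) :
    resp (trunc Q) a j = resp Q a j.castSucc := by
  have key : ∀ m : ℕ, ∀ j : Fin t, (j : ℕ) = m → resp (trunc Q) a j = resp Q a j.castSucc := by
    intro m
    induction m using Nat.strong_induction_on with
    | _ m ih =>
      intro j hj
      rw [resp_eq, resp_eq]
      have : past (resp (trunc Q) a) j = past (resp Q a) j.castSucc := by
        funext i
        exact ih i.1 (hj ▸ i.isLt) ⟨i.1, i.isLt.trans j.isLt⟩ rfl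
      rw [this]; rfl
  exact key _ j rfl

lemma energy_resp_succ (Q : QueryMaps N k (t + 1)) (a b : Fin N → ℝ) :
    energy Q b (resp Q a) = energy (trunc Q) b (resp (trunc Q) a)
      + sqNorm ((Q (Fin.last t) (resp (trunc Q) a)).mulVec b) := by
  have h1 : past (resp Q a) (Fin.last t) = resp (trunc Q) a := by
    funext i; exact (resp_trunc Q a i).symm
  have h2 : ∀ j : Fin t, past (resp (trunc Q) a) j = past (resp Q a) j.castSucc := by
    intro j; funext i
    exact resp_trunc Q a ⟨i.1, i.isLt.trans j.isLt⟩
  rw [energy, energy, Fin.sum_univ_castSucc]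
  congr 1
  · refine Finset.sum_congr rfl fun j _ => ?_
    rw [roundEnergy, roundEnergy, h2]; rfl
  · rw [roundEnergy, h1]

/-- The captured energy of the plant grows by at most a fixed factor per round: as long as it is
small, the transcript hardly depends on the plant, and so the next queries are nearly independent
of it. -/
lemma sum_escape_le {n : ℕ} (hn : 0 < n) {s L : ℝ} (m : ℕ → ℝ)
    (hm0 : 0 ≤ m 0)
    (hm : ∀ j, m j + (8 * n * s ^ 2 * m j + 4 * k + 16 * n * L) ≤ m (j + 1))
    {Q : QueryMaps (n * n) k t} (hQ : Q.Valid) :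
    ∑ w : SignPair n, gam (n * n) {g | s ^ 2 * m t
        < energy Q (s • signTensor w) (resp Q (s • signTensor w + g))}
      ≤ ENNReal.ofReal (Fintype.card (SignPair n) * (t * (2 * Real.exp (-L)))) := by
  have hn' : (0 : ℝ) < n := by exact_mod_cast hn
  induction t with
  | zero =>
    have : ∀ w : SignPair n, {g | s ^ 2 * m 0
        < energy Q (s • signTensor w) (resp Q (s • signTensor w + g))} = ∅ := by
      intro w
      ext g
      simp only [energy, Finset.univ_eq_empty, Finset.sum_empty, Set.mem_ofPred_eq,
        Set.mem_empty_iff_false, iff_false, not_lt]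
      positivity
    simp [this]
  | succ t ih =>
    set x := 8 * n * s ^ 2 * m t + 4 * k + 16 * n * L with hx
    set E : SignPair n → Set (Fin t → Fin k → ℝ) := fun w =>
      {ρ | x ≤ sqNorm ((Q (Fin.last t) ρ).mulVec (signTensor w))} with hE
    have hEm : ∀ w, MeasurableSet (E w) := by
      intro w
      refine measurableSet_le measurable_const ?_
      unfold sqNorm
      refine Finset.measurable_sum _ fun i _ => Measurable.pow_const ?_ 2
      simp only [Matrix.mulVec, dotProduct]
      exact Finset.measurable_sum _ fun l _ => (hQ.1 (Fin.last t) i l).mul_const _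
    have hcard : ∀ ρ, ((Finset.univ.filter fun w => ρ ∈ E w).card : ℝ)
        ≤ Fintype.card (SignPair n) * Real.exp (-(x / (8 * n) - k / (2 * n))) := by
      intro ρ
      refine card_energy_le hn _ (hQ.2.1 (Fin.last t) ρ) x _ fun w hw => ?_
      simpa [hE] using hw
    have hkey := sum_measure_le hQ.trunc (fun w => s • signTensor w) E hEm (s ^ 2 * m t) _ hcard
    have hexp : Real.exp ((s ^ 2 * m t - (x / (8 * n) - k / (2 * n))) / 2) = Real.exp (-L) := by
      congr 1; rw [hx]; field_simp; ring
    rw [hexp] at hkey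
    have hsplit : ∀ w : SignPair n, gam (n * n) {g | s ^ 2 * m (t + 1)
        < energy Q (s • signTensor w) (resp Q (s • signTensor w + g))}
        ≤ gam (n * n) {g | s ^ 2 * m t < energy (trunc Q) (s • signTensor w)
            (resp (trunc Q) (s • signTensor w + g))}
          + gam (n * n) {g | resp (trunc Q) (s • signTensor w + g) ∈ E w ∧
            energy (trunc Q) (s • signTensor w) (resp (trunc Q) (s • signTensor w + g))
              ≤ s ^ 2 * m t} := by
      intro w
      refine (measure_mono ?_).trans (measure_union_le _ _)
      intro g hg
      simp only [Set.mem_ofPred_eq] at hg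
      by_cases h : s ^ 2 * m t < energy (trunc Q) (s • signTensor w)
            (resp (trunc Q) (s • signTensor w + g))
      · exact Or.inl h
      · refine Or.inr ⟨?_, not_lt.mp h⟩
        rw [energy_resp_succ, Matrix.mulVec_smul, sqNorm_smul] at hg
        simp only [hE, Set.mem_ofPred_eq]
        by_contra hcon
        have h1 := mul_le_mul_of_nonneg_left (hm t) (sq_nonneg s)
        have h2 := mul_le_mul_of_nonneg_left (not_le.mp hcon).le (sq_nonneg s)
        rw [mul_add] at h1
        linarith [not_lt.mp h]
    refine (Finset.sum_le_sum fun w _ => hsplit w).trans ?_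
    rw [Finset.sum_add_distrib]
    refine (add_le_add (ih hQ.trunc) hkey).trans (le_of_eq ?_)
    rw [← ENNReal.ofReal_add (by positivity) (by positivity)]
    congr 1
    push_cast; ring

end QueryMaps

/-! ### Measurability of the closeness event -/

/-- Lower semicontinuity of the rank: linear independence of the images of finitely many vectors is
an open condition. -/
lemma isOpen_le_rank {n : ℕ} (r : ℕ) :
    IsOpen {M : Fin n → Fin n → ℝ | r ≤ (Matrix.of M).rank} := by
  have h : ∀ M : Fin n → Fin n → ℝ, r ≤ (Matrix.of M).rank ↔
      (r : Cardinal) ≤ ((Matrix.of M).mulVecLin).rank := by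
    intro M
    rw [Matrix.rank, LinearMap.rank, ← Module.finrank_eq_rank, Nat.cast_le]
  simp only [h, LinearMap.le_rank_iff_exists_linearIndependent_finset, Set.ofPred_exists,
    ← exists_prop]
  refine isOpen_biUnion fun t _ => ?_
  have hc : Continuous fun M : Fin n → Fin n → ℝ => fun x : (t : Set (Fin n → ℝ)) =>
      (Matrix.of M).mulVecLin x := by
    refine continuous_pi fun x => continuous_pi fun i => ?_
    simp only [Matrix.mulVecLin_apply, Matrix.mulVec, dotProduct, Matrix.of_apply]
    fun_prop
  exact isOpen_setOfPred_linearIndependent.preimage hc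

open scoped Matrix.Norms.L2Operator in
lemma continuous_specNorm {n : ℕ} :
    Continuous fun M : Matrix (Fin n) (Fin n) ℝ => specNorm M := by
  simp only [specNorm_eq_norm]
  exact continuous_norm

lemma measurableSet_close {X : Type*} [MeasurableSpace X] {n : ℕ} (r : ℕ) (η : ℝ)
    (f : X → Matrix (Fin n) (Fin n) ℝ) (hf : ∀ i j, Measurable fun x => f x i j)
    (P : Matrix (Fin n) (Fin n) ℝ) :
    MeasurableSet {x | (f x).rank ≤ r ∧ specNorm (P - f x) ≤ η} := by
  have hF : Measurable fun x => (fun i j => f x i j : Fin n → Fin n → ℝ) :=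
    measurable_pi_lambda _ fun i => measurable_pi_lambda _ fun j => hf i j
  have h1 : IsClosed {M : Fin n → Fin n → ℝ | (Matrix.of M).rank ≤ r} := by
    have := (isOpen_le_rank (n := n) (r + 1)).isClosed_compl
    convert this using 1
    ext M
    simp only [Set.mem_ofPred_eq, Set.mem_compl_iff]
    omega
  have h2 : IsClosed {M : Fin n → Fin n → ℝ | specNorm (P - Matrix.of M) ≤ η} := by
    refine isClosed_le ?_ continuous_const
    have : Continuous fun M : Fin n → Fin n → ℝ => P - Matrix.of M := by
      refine Continuous.sub continuous_const ?_
      exact continuous_id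
    exact continuous_specNorm.comp this
  exact (hF h1.measurableSet).inter (hF h2.measurableSet)

/-! ### Failure of every deterministic algorithm on the planted distribution -/

/-- A deterministic algorithm with few rounds outputs, on average over the plant, a matrix close to
the plant only with small probability. -/
lemma sum_close_le {n r k t : ℕ} (hn : 0 < n) {s η L : ℝ} (hs : 0 < s) (hη : 2 * η ≤ s * n)
    (m : ℕ → ℝ) (hm0 : 0 ≤ m 0)
    (hm : ∀ j, m j + (8 * n * s ^ 2 * m j + 4 * k + 16 * n * L) ≤ m (j + 1))
    {Q : QueryMaps (n * n) k t} (hQ : Q.Valid)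
    (f : (Fin t → Fin k → ℝ) → Matrix (Fin n) (Fin n) ℝ)
    (hf : ∀ i j, Measurable fun x => f x i j) :
    ∑ w : SignPair n, gam (n * n) {g | (f (Q.resp (s • signTensor w + g))).rank ≤ r ∧
        specNorm (plantMat s w - f (Q.resp (s • signTensor w + g))) ≤ η}
      ≤ ENNReal.ofReal (Fintype.card (SignPair n) * (t * (2 * Real.exp (-L))
        + 2 * Real.exp ((s ^ 2 * m t - ((n : ℝ) / 8 - r / 2)) / 2))) := by
  have h1 := QueryMaps.sum_escape_le hn m hm0 hm hQ
  have h2 := QueryMaps.sum_measure_le hQ (fun w : SignPair n => s • signTensor w)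
    (fun w => {ρ | (f ρ).rank ≤ r ∧ specNorm (plantMat s w - f ρ) ≤ η})
    (fun w => measurableSet_close r η f hf _) (s ^ 2 * m t) ((n : ℝ) / 8 - r / 2) (by
      intro ρ
      by_cases hr : (f ρ).rank ≤ r
      · refine card_close_le hn (f ρ) hr hs hη _ fun w hw => ?_
        simp only [Finset.mem_filter] at hw
        exact hw.2.2
      · refine le_trans (le_of_eq ?_) (mul_nonneg (Nat.cast_nonneg _)
          (Real.exp_pos _).le)
        rw [Nat.cast_eq_zero, Finset.card_eq_zero]
        refine Finset.eq_empty_of_forall_notMem fun w hw => ?_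
        simp only [Finset.mem_filter] at hw
        exact hr hw.2.1)
  rw [mul_add, ENNReal.ofReal_add (by positivity) (by positivity)]
  refine le_trans ?_ (add_le_add h1 h2)
  rw [← Finset.sum_add_distrib]
  refine Finset.sum_le_sum fun w _ => (measure_mono ?_).trans (measure_union_le _ _)
  intro g hg
  by_cases h : s ^ 2 * m t
      < Q.energy (s • signTensor w) (Q.resp (s • signTensor w + g))
  · exact Or.inl h
  · exact Or.inr ⟨hg, not_lt.mp h⟩

/-! ### Averaging over the seed -/

/-- A randomized algorithm meeting the approximation guarantee is close to the plant with
probability at least `(99/100)(9/10)` over the Gaussian noise and the seed, so it cannot satisfy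
the bound for deterministic algorithms when its right-hand side is at most one half. -/
lemma avg_contra {n r k t p : ℕ} (hn : 16 ≤ n) (hr : 1 ≤ r) (hp : 1 ≤ p) {s η L : ℝ}
    (hs : 0 < s) (hη : 2 * η ≤ s * n)
    (hτ : 3 * p * (3 * √(40 * n * Real.log n)) ≤ η)
    (m : ℕ → ℝ) (hm0 : 0 ≤ m 0)
    (hm : ∀ j, m j + (8 * n * s ^ 2 * m j + 4 * k + 16 * n * L) ≤ m (j + 1))
    (hsmall : t * (2 * Real.exp (-L))
        + 2 * Real.exp ((s ^ 2 * m t - ((n : ℝ) / 8 - r / 2)) / 2) ≤ 1 / 2)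
    {Ω : Type} [MeasurableSpace Ω] (μ : Measure Ω) [IsProbabilityMeasure μ]
    (Qf : Ω → QueryMaps (n * n) k t)
    (out : Ω → (Fin t → Fin k → ℝ) → Matrix (Fin n) (Fin n) ℝ)
    (hQ : ∀ ω, (Qf ω).Valid)
    (hQm : ∀ (j : Fin t) (i : Fin k) (l : Fin (n * n)),
      Measurable fun p : Ω × (Fin (j : ℕ) → Fin k → ℝ) => Qf p.1 j p.2 i l)
    (hout : ∀ i j : Fin n, Measurable fun p : Ω × (Fin t → Fin k → ℝ) => out p.1 p.2 i j)
    (hsucc : ∀ A : Matrix (Fin n) (Fin n) ℝ, (99 / 100 : ℝ≥0∞) ≤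
      μ {ω | (out ω (QueryMaps.resp (Qf ω) (_root_.vec n A))).rank ≤ r ∧
        kyFanNorm p (A - out ω (QueryMaps.resp (Qf ω) (_root_.vec n A)))
          ≤ 2 * sInf {c' | ∃ X : Matrix (Fin n) (Fin n) ℝ,
              X.rank ≤ r ∧ c' = kyFanNorm p (A - X)}}) : False := by
  set S : SignPair n → Set (Ω × (Fin (n * n) → ℝ)) := fun w =>
    {x | (out x.1 ((Qf x.1).resp (s • signTensor w + x.2))).rank ≤ r ∧
      specNorm (plantMat s w - out x.1 ((Qf x.1).resp (s • signTensor w + x.2))) ≤ η} with hS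
  have hSm : ∀ w, MeasurableSet (S w) := by
    intro w
    refine measurableSet_close r η _ (fun i j => ?_) _
    have h1 : Measurable fun x : Ω × (Fin (n * n) → ℝ) =>
        (Qf x.1).resp (s • signTensor w + x.2) :=
      (QueryMaps.measurable_resp_seed hQm).comp
        (measurable_fst.prodMk (measurable_snd.const_add _))
    exact (hout i j).comp (measurable_fst.prodMk h1)
  have hlow : ∀ w, (99 / 100 : ℝ≥0∞) * (9 / 10) ≤ (μ.prod (gam (n * n))) (S w) := by
    intro w
    rw [Measure.prod_apply_symm (hSm w)]
    refine le_trans ?_ (mul_meas_ge_le_lintegral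
      (measurable_measure_prodMk_right (hSm w)) (99 / 100))
    gcongr
    have htail := gaussian_specNorm_tail hn
    have hgood : (9 / 10 : ℝ≥0∞)
        ≤ gam (n * n) {g | specNorm (unvec g) ≤ 3 * √(40 * n * Real.log n)} := by
      have h1 : (1 : ℝ≥0∞) ≤ gam (n * n) {g | specNorm (unvec g) ≤ 3 * √(40 * n * Real.log n)}
          + 1 / 10 := by
        calc (1 : ℝ≥0∞) = gam (n * n) Set.univ := measure_univ.symm
          _ ≤ gam (n * n) ({g | specNorm (unvec g) ≤ 3 * √(40 * n * Real.log n)}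
              ∪ {g | ¬ specNorm (unvec g) ≤ 3 * √(40 * n * Real.log n)}) :=
            measure_mono fun g _ => em _
          _ ≤ _ := (measure_union_le _ _).trans (by gcongr)
      have h2 : (1 : ℝ≥0∞) = 9 / 10 + 1 / 10 := by
        rw [← ENNReal.add_div]; norm_num
        exact (ENNReal.div_self (by norm_num) (by norm_num)).symm
      exact ENNReal.le_of_add_le_add_right (a := 1 / 10) (by finiteness) (h2.symm.le.trans h1)
    refine hgood.trans (measure_mono fun g hg => ?_)
    refine (hsucc (plantMat s w + unvec g)).trans (measure_mono fun ω hω => ?_)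
    have hv : _root_.vec n (plantMat s w + unvec g) = s • signTensor w + g := by
      rw [vec_add', vec_plantMat, vec_unvec]
    rw [Set.mem_ofPred_eq, hv] at hω
    refine ⟨hω.1, le_trans (specNorm_sub_le_of_approx hp _ _ _
      ((rank_plantMat_le s w).trans hr) ?_ hω.2) hτ⟩
    rw [add_sub_cancel_left]; exact hg
  have hup : ∑ w, (μ.prod (gam (n * n))) (S w)
      ≤ ENNReal.ofReal (Fintype.card (SignPair n) * (1 / 2)) := by
    simp only [fun w => Measure.prod_apply (μ := μ) (ν := gam (n * n)) (hSm w)]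
    rw [← lintegral_finsetSum _ fun w _ => measurable_measure_prodMk_left (hSm w)]
    calc _ ≤ ∫⁻ _ : Ω, ENNReal.ofReal (Fintype.card (SignPair n) * (1 / 2)) ∂μ := by
          refine lintegral_mono fun ω => ?_
          refine (sum_close_le (by omega) hs hη m hm0 hm (hQ ω) (out ω)
            (fun i j => (hout i j).comp measurable_prodMk_left)).trans ?_
          exact ENNReal.ofReal_le_ofReal (by gcongr)
      _ = _ := by rw [lintegral_const, measure_univ, mul_one]
  have h3 := (Finset.sum_le_sum fun w (_ : w ∈ Finset.univ) => hlow w).trans hup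
  have hc : (0 : ℝ) < Fintype.card (SignPair n) := by
    exact_mod_cast Fintype.card_pos
  have h4 : (99 / 100 : ℝ≥0∞) * (9 / 10) = ENNReal.ofReal (891 / 1000) := by
    rw [← ENNReal.toReal_eq_toReal_iff' (by finiteness) (by finiteness)]
    rw [ENNReal.toReal_ofReal (by norm_num)]
    simp
    norm_num
  rw [Finset.sum_const, Finset.card_univ, nsmul_eq_mul, h4, ← ENNReal.ofReal_natCast,
    ← ENNReal.ofReal_mul hc.le, ENNReal.ofReal_le_ofReal_iff (by positivity)] at h3
  nlinarith

open scoped Matrix.Norms.L2Operator in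
lemma specNorm_zero {n : ℕ} : specNorm (0 : Matrix (Fin n) (Fin n) ℝ) = 0 := by
  rw [specNorm_eq_norm, norm_zero]

/-- Without any measurement the output ignores the input, so it cannot reproduce exactly two
distinct matrices of rank at most one. -/
lemma zero_rounds_contra {n r k p : ℕ} (hn : 0 < n) (hr : 1 ≤ r) (hp : 1 ≤ p)
    {Ω : Type} [MeasurableSpace Ω] (μ : Measure Ω) [IsProbabilityMeasure μ]
    (Qf : Ω → QueryMaps (n * n) k 0)
    (out : Ω → (Fin 0 → Fin k → ℝ) → Matrix (Fin n) (Fin n) ℝ)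
    (hout : ∀ i j : Fin n, Measurable fun p : Ω × (Fin 0 → Fin k → ℝ) => out p.1 p.2 i j)
    (hsucc : ∀ A : Matrix (Fin n) (Fin n) ℝ, (99 / 100 : ℝ≥0∞) ≤
      μ {ω | (out ω (QueryMaps.resp (Qf ω) (_root_.vec n A))).rank ≤ r ∧
        kyFanNorm p (A - out ω (QueryMaps.resp (Qf ω) (_root_.vec n A)))
          ≤ 2 * sInf {c' | ∃ X : Matrix (Fin n) (Fin n) ℝ,
              X.rank ≤ r ∧ c' = kyFanNorm p (A - X)}}) : False := by
  set w : SignPair n := (fun _ => true, fun _ => true)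
  have key : ∀ s : ℝ, (99 / 100 : ℝ≥0∞)
      ≤ μ {ω | out ω (fun j => j.elim0) ⟨0, hn⟩ ⟨0, hn⟩ = plantMat s w ⟨0, hn⟩ ⟨0, hn⟩} := by
    intro s
    refine (hsucc (plantMat s w)).trans (measure_mono fun ω hω => ?_)
    have hz : specNorm (plantMat s w - plantMat s w) ≤ 0 := by
      rw [sub_self, specNorm_zero]
    have h1 := specNorm_sub_le_of_approx hp _ (plantMat s w) _
      ((rank_plantMat_le s w).trans hr) (τ := 0) hz hω.2
    rw [mul_zero] at h1
    have h2 := sub_eq_zero.mp (specNorm_eq_zero h1)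
    have h3 : (Qf ω).resp (_root_.vec n (plantMat s w)) = fun j => j.elim0 :=
      Subsingleton.elim _ _
    rw [h3] at h2
    rw [Set.mem_ofPred_eq, ← h2]
  have hm : Measurable fun ω => out ω (fun j => j.elim0) ⟨0, hn⟩ ⟨0, hn⟩ :=
    (hout _ _).comp measurable_prodMk_right
  have hne : plantMat (0 : ℝ) w ⟨0, hn⟩ ⟨0, hn⟩ ≠ plantMat 1 w ⟨0, hn⟩ ⟨0, hn⟩ := by
    simp [plantMat, w, sgn]
  have hd : Disjoint
      {ω | out ω (fun j => j.elim0) ⟨0, hn⟩ ⟨0, hn⟩ = plantMat 0 w ⟨0, hn⟩ ⟨0, hn⟩}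
      {ω | out ω (fun j => j.elim0) ⟨0, hn⟩ ⟨0, hn⟩ = plantMat 1 w ⟨0, hn⟩ ⟨0, hn⟩} :=
    Set.disjoint_left.mpr fun ω h1 h2 => hne (h1.symm.trans h2)
  have h5 := (add_le_add (key 0) (key 1)).trans
    ((measure_union hd (hm (measurableSet_singleton _))).symm.le.trans prob_le_one)
  rw [← ENNReal.toReal_le_toReal (by finiteness) (by finiteness),
    ENNReal.toReal_add (by finiteness) (by finiteness)] at h5
  simp at h5
  norm_num at h5

/-! ### Choice of parameters -/

/-- The per-round energy growth factor, `2 + 8 s² n` for the plant scale `s` used below. -/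
def growth (n p : ℕ) : ℝ := 2 + 8 * (12960 * p ^ 2 * Real.log n)

/-- The guarantee fails whenever `t ≤ n / 8` and the energy after `t` rounds of growth stays below
`n²`. -/
lemma few_rounds_contra {n r k t p : ℕ} (hn : 256 ≤ n) (hr : 1 ≤ r) (hp : 1 ≤ p)
    (hk : n * r ≤ k) (ht : 8 * t ≤ n)
    (hgrow : 80 * Real.log n * growth n p ^ (t + 1) * k ≤ (n : ℝ) ^ 2)
    {Ω : Type} [MeasurableSpace Ω] (μ : Measure Ω) [IsProbabilityMeasure μ]
    (Qf : Ω → QueryMaps (n * n) k t)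
    (out : Ω → (Fin t → Fin k → ℝ) → Matrix (Fin n) (Fin n) ℝ)
    (hQ : ∀ ω, (Qf ω).Valid)
    (hQm : ∀ (j : Fin t) (i : Fin k) (l : Fin (n * n)),
      Measurable fun p : Ω × (Fin (j : ℕ) → Fin k → ℝ) => Qf p.1 j p.2 i l)
    (hout : ∀ i j : Fin n, Measurable fun p : Ω × (Fin t → Fin k → ℝ) => out p.1 p.2 i j)
    (hsucc : ∀ A : Matrix (Fin n) (Fin n) ℝ, (99 / 100 : ℝ≥0∞) ≤
      μ {ω | (out ω (QueryMaps.resp (Qf ω) (_root_.vec n A))).rank ≤ r ∧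
        kyFanNorm p (A - out ω (QueryMaps.resp (Qf ω) (_root_.vec n A)))
          ≤ 2 * sInf {c' | ∃ X : Matrix (Fin n) (Fin n) ℝ,
              X.rank ≤ r ∧ c' = kyFanNorm p (A - X)}}) : False := by
  have hn' : (256 : ℝ) ≤ n := by exact_mod_cast hn
  have hn0 : (0 : ℝ) < n := by linarith
  have hp' : (1 : ℝ) ≤ p := by exact_mod_cast hp
  have hr' : (1 : ℝ) ≤ r := by exact_mod_cast hr
  have hk' : (n : ℝ) * r ≤ k := by exact_mod_cast hk
  have ht' : 8 * (t : ℝ) ≤ n := by exact_mod_cast ht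
  have hkn : (n : ℝ) ≤ k := by nlinarith
  have hL : 1 ≤ Real.log n := by
    rw [Real.le_log_iff_exp_le hn0]
    linarith [Real.exp_one_lt_d9]
  set L := Real.log n with hLdef
  -- `τ` bounds the noise, `3pτ` the distance of the output to the plant, and the scale `s` is the
  -- smallest one for which a distance `3pτ` is at most half the spectral norm `s n` of the plant.
  set τ := 3 * √(40 * n * L) with hτ
  have hτ0 : 0 < τ := by positivity
  have hτ2 : τ ^ 2 = 360 * n * L := by
    rw [hτ, mul_pow, Real.sq_sqrt (by positivity)]; ring
  set s : ℝ := 2 * (3 * p * τ) / n with hs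
  have hs2 : n * s ^ 2 = 12960 * p ^ 2 * L := by
    have : n * s ^ 2 = 36 * p ^ 2 * τ ^ 2 / n := by rw [hs]; field_simp; ring
    rw [this, hτ2]; field_simp; ring
  set b := growth n p with hb
  have hbeq : b = 2 + 8 * (n * s ^ 2) := by rw [hs2, hb, growth]
  have hb1 : 1 ≤ b := by rw [hbeq]; nlinarith [mul_nonneg hn0.le (sq_nonneg s)]
  have hbt : 1 ≤ b ^ t := one_le_pow₀ hb1
  have hbt1 : 1 ≤ b ^ (t + 1) := one_le_pow₀ hb1
  refine avg_contra (s := s) (η := 3 * p * τ) (L := L) (by omega) hr hp (by positivity)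
    (by rw [hs]; field_simp; rfl) le_rfl (fun j => 20 * k * L * b ^ j) (by positivity) ?_ ?_ μ Qf out
    hQ hQm hout hsucc
  · intro j
    have hbj : 1 ≤ b ^ j := one_le_pow₀ hb1
    have h1 : 4 * (k : ℝ) + 16 * n * L ≤ 20 * k * L := by nlinarith
    have h2 : 20 * k * L ≤ 20 * k * L * b ^ j := le_mul_of_one_le_right (by positivity) hbj
    have h3 : 20 * k * L * b ^ (j + 1)
        = 2 * (20 * k * L * b ^ j) + 8 * n * s ^ 2 * (20 * k * L * b ^ j) := by
      rw [pow_succ]; nth_rewrite 2 [hbeq]; ring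
    rw [h3]; linarith
  · have hrn : 80 * (r : ℝ) ≤ n := by
      have h1 : 80 * (k : ℝ) ≤ (n : ℝ) ^ 2 := by
        refine le_trans ?_ hgrow
        have : 1 ≤ L * b ^ (t + 1) := one_le_mul_of_one_le_of_one_le hL hbt1
        nlinarith
      nlinarith
    have hen : s ^ 2 * (20 * k * L * b ^ t) ≤ n / 32 := by
      have h1 : 8 * (n * s ^ 2) * b ^ t ≤ b ^ (t + 1) := by
        rw [pow_succ b t, mul_comm (b ^ t)]; gcongr; linarith
      have h2 : 8 * (n * s ^ 2) * b ^ t * (80 * L * k) ≤ (n : ℝ) ^ 2 := by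
        refine le_trans (mul_le_mul_of_nonneg_right h1 (by positivity)) ?_
        linarith
      have h3 : n * (s ^ 2 * (20 * k * L * b ^ t)) ≤ n * (n / 32) := by nlinarith
      exact le_of_mul_le_mul_left h3 hn0
    have he1 : Real.exp (-L) = (n : ℝ)⁻¹ := by rw [Real.exp_neg, Real.exp_log hn0]
    have h1 : t * (2 * Real.exp (-L)) ≤ 1 / 4 := by
      rw [he1, ← div_eq_mul_inv, ← mul_div_assoc, div_le_iff₀ hn0]; linarith
    have h2 : Real.exp ((s ^ 2 * (20 * k * L * b ^ t) - ((n : ℝ) / 8 - r / 2)) / 2) ≤ 1 / 8 := by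
      have h3 : Real.exp ((s ^ 2 * (20 * k * L * b ^ t) - ((n : ℝ) / 8 - r / 2)) / 2)
          ≤ Real.exp (-(n / 32)) := Real.exp_le_exp.mpr (by linarith)
      refine h3.trans ?_
      rw [Real.exp_neg, one_div]
      refine inv_anti₀ (by norm_num) ?_
      linarith [Real.add_one_le_exp ((n : ℝ) / 32)]
    linarith

lemma three_le_log {n : ℕ} (hn : 256 ≤ n) : 3 ≤ Real.log n := by
  have hn' : (256 : ℝ) ≤ n := by exact_mod_cast hn
  rw [Real.le_log_iff_exp_le (by linarith)]
  have h : Real.exp 3 = Real.exp 1 ^ 3 := by rw [← Real.exp_nat_mul]; norm_num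
  rw [h]
  have := pow_le_pow_left₀ (Real.exp_pos 1).le Real.exp_one_lt_d9.le 3
  norm_num at this ⊢; linarith

lemma one_le_log_log {n : ℕ} (hn : 256 ≤ n) : 1 ≤ Real.log (Real.log n) := by
  have h := three_le_log hn
  rw [Real.le_log_iff_exp_le (by linarith)]
  linarith [Real.exp_one_lt_d9]

/-- If the energy after `t ≥ 1` rounds of growth exceeds `n²`, then `t` obeys the claimed lower
bound. -/
lemma log_ratio_le {n k t p : ℕ} (hn : 256 ≤ n) (hp : 1 ≤ p) (hk : 0 < k) (ht : 1 ≤ t)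
    (hgrow : (n : ℝ) ^ 2 < 80 * Real.log n * growth n p ^ (t + 1) * k) :
    Real.log ((n : ℝ) ^ 2 / k) ≤ 40 * t * (Real.log p + Real.log (Real.log n)) := by
  have hn' : (256 : ℝ) ≤ n := by exact_mod_cast hn
  have hn0 : (0 : ℝ) < n := by linarith
  have hp' : (1 : ℝ) ≤ p := by exact_mod_cast hp
  have hk' : (0 : ℝ) < k := by exact_mod_cast hk
  have ht' : (1 : ℝ) ≤ t := by exact_mod_cast ht
  have hL : 3 ≤ Real.log n := three_le_log hn
  have hLL := one_le_log_log hn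
  have hlp : 0 ≤ Real.log p := Real.log_nonneg hp'
  set L := Real.log n with hLdef
  have hb : growth n p ≤ 103682 * p ^ 2 * L := by
    have : 1 ≤ (p : ℝ) ^ 2 * L := one_le_mul_of_one_le_of_one_le (one_le_pow₀ hp') (by linarith)
    rw [growth, ← hLdef]; nlinarith
  have hb0 : 0 < growth n p := by rw [growth, ← hLdef]; positivity
  have hexp : ∀ m : ℕ, (2.7 : ℝ) ^ m ≤ Real.exp m := by
    intro m
    have : Real.exp m = Real.exp 1 ^ m := by rw [← Real.exp_nat_mul]; norm_num
    rw [this]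
    exact pow_le_pow_left₀ (by norm_num) (by linarith [Real.exp_one_gt_d9]) m
  have h12 : Real.log 103682 ≤ 12 := by
    rw [Real.log_le_iff_le_exp (by norm_num)]
    refine le_trans ?_ (hexp 12); norm_num
  have h5 : Real.log 80 ≤ 5 := by
    rw [Real.log_le_iff_le_exp (by norm_num)]
    refine le_trans ?_ (hexp 5); norm_num
  have hlb : Real.log (growth n p) ≤ 12 + 2 * Real.log p + Real.log L := by
    refine (Real.log_le_log hb0 hb).trans ?_
    rw [Real.log_mul (by positivity) (by positivity), Real.log_mul (by norm_num) (by positivity),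
      Real.log_pow]
    push_cast; linarith
  have h1 : Real.log ((n : ℝ) ^ 2 / k) ≤ Real.log (80 * L * growth n p ^ (t + 1)) := by
    refine Real.log_le_log (by positivity) ?_
    rw [div_le_iff₀ hk']; exact hgrow.le
  rw [Real.log_mul (by positivity) (by positivity), Real.log_mul (by norm_num) (by positivity),
    Real.log_pow] at h1
  push_cast at h1
  set D := Real.log p + Real.log L with hD
  have hD1 : 1 ≤ D := by linarith
  have h2 : Real.log (growth n p) ≤ 14 * D := by linarith
  have h3 : ((t : ℝ) + 1) * Real.log (growth n p) ≤ (t + 1) * (14 * D) := by gcongr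
  nlinarith

/-- Round lower bound for 2-approximate Ky-Fan-`p` norm low-rank approximation. -/
theorem kyfan_LRA_round_lower_bound :
    ∃ (c : ℝ) (n₀ : ℕ), 0 < c ∧
      ∀ (n r k t p : ℕ), n₀ ≤ n → 1 ≤ r → 1 ≤ p → p ≤ n → n * r ≤ k → k ≤ n ^ 2 →
      ∀ (Ω : Type) [MeasurableSpace Ω] (μ : Measure Ω) [IsProbabilityMeasure μ]
        (Qf : Ω → QueryMaps (n * n) k t)
        (out : Ω → (Fin t → Fin k → ℝ) → Matrix (Fin n) (Fin n) ℝ),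
        (∀ ω, (Qf ω).Valid) →
        (∀ (j : Fin t) (i : Fin k) (l : Fin (n * n)),
            Measurable fun p : Ω × (Fin (j : ℕ) → Fin k → ℝ) => Qf p.1 j p.2 i l) →
        (∀ i j : Fin n,
            Measurable fun p : Ω × (Fin t → Fin k → ℝ) => out p.1 p.2 i j) →
        (∀ A : Matrix (Fin n) (Fin n) ℝ,
            (99 / 100 : ℝ≥0∞) ≤
              μ {ω | (out ω (QueryMaps.resp (Qf ω) (vec n A))).rank ≤ r ∧
                    kyFanNorm p (A - out ω (QueryMaps.resp (Qf ω) (vec n A)))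
                      ≤ 2 * sInf {c' | ∃ X : Matrix (Fin n) (Fin n) ℝ,
                          X.rank ≤ r ∧ c' = kyFanNorm p (A - X)}}) →
        c * (Real.log ((n : ℝ) ^ 2 / k) /
            (Real.log p + Real.log (Real.log n))) ≤ (t : ℝ) := by
  refine ⟨1 / 40, 256, by norm_num, ?_⟩
  intro n r k t p hn hr hp _ hk _ Ω _ μ _ Qf out hQ hQm hout hsucc
  have hkn : n ≤ k := le_trans (Nat.le_mul_of_pos_right n hr) hk
  have hn' : (256 : ℝ) ≤ n := by exact_mod_cast hn
  have hp' : (1 : ℝ) ≤ p := by exact_mod_cast hp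
  have hD : 1 ≤ Real.log p + Real.log (Real.log n) := by
    have := one_le_log_log hn
    linarith [Real.log_nonneg hp']
  rcases Nat.eq_zero_or_pos t with rfl | ht
  · exact (zero_rounds_contra (by omega) hr hp μ Qf out hout hsucc).elim
  have key : Real.log ((n : ℝ) ^ 2 / k)
      ≤ 40 * t * (Real.log p + Real.log (Real.log n)) := by
    by_cases hgrow : 80 * Real.log n * growth n p ^ (t + 1) * k ≤ (n : ℝ) ^ 2
    · have hbig : n < 8 * t := by
        by_contra hcon
        exact few_rounds_contra hn hr hp hk (not_lt.mp hcon) hgrow μ Qf out hQ hQm hout hsucc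
      have hbig' : (n : ℝ) ≤ 8 * t := by exact_mod_cast hbig.le
      have hkn' : (n : ℝ) ≤ k := by exact_mod_cast hkn
      have h1 : (n : ℝ) ^ 2 / k ≤ n := by
        rw [div_le_iff₀ (by linarith)]; nlinarith
      have h2 : Real.log ((n : ℝ) ^ 2 / k) ≤ n := by
        refine (Real.log_le_log (div_pos (by positivity) (by linarith)) h1).trans ?_
        exact (Real.log_le_sub_one_of_pos (by linarith)).trans (by linarith)
      nlinarith
    · exact log_ratio_le hn hp (by omega) ht (not_le.mp hgrow)
  rw [← mul_div_assoc, div_le_iff₀ (by linarith)]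
  linarith

end
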